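/- arXiv:math/0204143 — 2 statements merged into one kernel-verified Lean document; each statement's English description precedes it below -/
import Mathlib

section
/- For every cardinal number α ≥ 𝔠 and every index set Q with |Q| = α, there exists a family {(G_q, H_q) : q ∈ Q} of pairs of metrizable topological spaces, each of cardinality α, such that for every q ∈ Q: G_q is homeomorphic to a clopen subset of H_q, H_q is homeomorphic to a clopen subset of G_q, but G_q is not homeomorphic to H_q; and moreover, whenever q ≠ q', there exists no injective continuous map from any of the spaces G_q, H_q into any of the spaces G_{q'}, H_{q'}. -/
universe u

open Cardinal

/-- `A` is homeomorphic to a clopen subset of `B`. -/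
def HomeoToClopenSubset (A : Type*) [TopologicalSpace A]
    (B : Type*) [TopologicalSpace B] : Prop :=
  ∃ t : Set B, IsClopen t ∧ Nonempty (A ≃ₜ t)

/-- There exists no injective continuous map from `A` into `B`. -/
def NoInjCont (A : Type*) [TopologicalSpace A]
    (B : Type*) [TopologicalSpace B] : Prop :=
  ¬ ∃ f : A → B, Continuous f ∧ Function.Injective f

/-- The conditions on a single pair `(G, H)`: both metrizable of cardinality `α`,
each is homeomorphic to a clopen subset of the other, but `G` and `H` are not
homeomorphic. -/
def Stmt10Pair (α : Cardinal.{u}) (G H : Type u)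
    [TopologicalSpace G] [TopologicalSpace H] : Prop :=
  TopologicalSpace.MetrizableSpace G ∧ TopologicalSpace.MetrizableSpace H ∧
  #G = α ∧ #H = α ∧
  HomeoToClopenSubset G H ∧ HomeoToClopenSubset H G ∧ IsEmpty (G ≃ₜ H)

namespace S10
open Set Filter Topology

/-- A relation that cannot be avoided by small sets. -/
def Big {Y : Type} (R : Y → Y → Prop) : Prop :=
  ∀ A B : Set Y, #A < 𝔠 → #B < 𝔠 → ∃ x z, R x z ∧ x ∉ A ∧ z ∉ B ∧ x ≠ z

theorem diag {Y T : Type} (hT : #T ≤ 𝔠) (R : T → Y → Y → Prop) (D : Set Y) (hD : D.Countable)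
    (hR : ∀ t, Big (R t)) :
    ∃ (K : Set Y) (x z : T → Y), D ⊆ K ∧ Function.Injective x ∧
      ∀ t, R t (x t) (z t) ∧ x t ∈ K ∧ z t ∉ K := by
  obtain ⟨r, wo, hr⟩ := Cardinal.ord_eq T
  have hseg : ∀ t, #{s // r s t} < 𝔠 := by
    intro t
    have := Cardinal.card_typein_lt (r := r) t hr
    exact lt_of_lt_of_le (by simpa using this) hT
  have wf : WellFounded r := wo.wf
  have step : ∀ (t : T) (c : ∀ s, r s t → Y × Y), ∃ p : Y × Y, R t p.1 p.2 ∧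
      (∀ s (h : r s t), p.1 ≠ (c s h).1) ∧ (∀ s (h : r s t), p.1 ≠ (c s h).2) ∧
      p.2 ∉ D ∧ (∀ s (h : r s t), p.2 ≠ (c s h).1) ∧ p.1 ≠ p.2 := by
    intro t c
    have h1 : #(range (fun s : {s // r s t} => (c s.1 s.2).1)) < 𝔠 :=
      lt_of_le_of_lt Cardinal.mk_range_le (hseg t)
    have h2 : #(range (fun s : {s // r s t} => (c s.1 s.2).2)) < 𝔠 :=
      lt_of_le_of_lt Cardinal.mk_range_le (hseg t)
    have h3 : #D < 𝔠 := lt_of_le_of_lt (Cardinal.le_aleph0_iff_set_countable.2 hD)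
      Cardinal.aleph0_lt_continuum
    obtain ⟨x, z, hxz, hx, hz, hne⟩ := hR t _ _
      (lt_of_le_of_lt (Cardinal.mk_union_le _ _) (Cardinal.add_lt_of_lt Cardinal.aleph0_le_continuum h1 h2))
      (lt_of_le_of_lt (Cardinal.mk_union_le _ _) (Cardinal.add_lt_of_lt Cardinal.aleph0_le_continuum h3 h1))
    refine ⟨(x, z), hxz, ?_, ?_, ?_, ?_, hne⟩
    · intro s h e; exact hx (Or.inl ⟨⟨s, h⟩, e.symm⟩)
    · intro s h e; exact hx (Or.inr ⟨⟨s, h⟩, e.symm⟩)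
    · intro h; exact hz (Or.inl h)
    · intro s h e; exact hz (Or.inr ⟨⟨s, h⟩, e.symm⟩)
  choose g hg using step
  let c : T → Y × Y := wf.fix g
  have hc : ∀ t, c t = g t (fun s _ => c s) := fun t => wf.fix_eq g t
  have H := fun t => hg t (fun s _ => c s)
  simp only [← hc] at H
  refine ⟨D ∪ range (fun t => (c t).1), fun t => (c t).1, fun t => (c t).2,
    subset_union_left, ?_, ?_⟩
  · intro s t e
    rcases trichotomous_of r s t with h | h | h
    · exact absurd e.symm ((H t).2.1 s h)
    · exact h
    · exact absurd e ((H s).2.1 t h)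
  · intro t
    refine ⟨(H t).1, Or.inr ⟨t, rfl⟩, ?_⟩
    rintro (h | ⟨s, e⟩)
    · exact (H t).2.2.2.1 h
    · simp only at e
      rcases trichotomous_of r s t with h | h | h
      · exact (H t).2.2.2.2.1 s h e.symm
      · subst h; exact (H s).2.2.2.2.2 e
      · exact (H s).2.2.1 t h e

/-! ### Rigid ladders -/

open Classical in
/-- A fixed choice of a ladder. -/
noncomputable def lad {V : Type*} [LinearOrder V] (v : V) (n : ℕ) : V :=
  if h : ∃ a : ℕ → V, StrictMono a ∧ IsLUB (range a) v then h.choose n else v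

theorem lad_good {V : Type*} [LinearOrder V] {v : V}
    (h : ∃ a : ℕ → V, StrictMono a ∧ IsLUB (range a) v) :
    (∀ n, lad v n < v) ∧ IsLUB (range (lad v)) v := by
  have e : lad v = h.choose := by
    funext n; simp only [lad, dif_pos h]
  rw [e]
  obtain ⟨h1, h2⟩ := h.choose_spec
  exact ⟨fun n => lt_of_lt_of_le (h1 (Nat.lt_succ_self n)) (h2.1 ⟨_, rfl⟩), h2⟩

theorem rigid {V : Type*} [LinearOrder V] [WellFoundedLT V] [OrderTop V] (f : V → V)
    (hf : StrictMono f) (hl : ∀ v n, lad v n < v → f (lad v n) = lad (f v) n) (x : V) :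
    f x = x := by
  by_contra hne
  have hx : x < f x := lt_of_le_of_ne hf.le_apply (Ne.symm hne)
  let a : ℕ → V := fun k => f^[k] x
  have ha1 : ∀ k, a (k+1) = f (a k) := fun k => Function.iterate_succ_apply' f k x
  have ha : StrictMono a := by
    apply strictMono_nat_of_lt_succ
    intro k
    induction k with
    | zero => exact hx
    | succ k ih => rw [ha1 (k+1), ha1 k]; rw [ha1 k] at ih; exact hf ih
  obtain ⟨v, hv⟩ : ∃ v, IsLUB (range a) v := by
    have hne : (upperBounds (range a)).Nonempty := ⟨⊤, fun _ _ => le_top⟩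
    refine ⟨wellFounded_lt.min _ hne, wellFounded_lt.min_mem _ hne, fun w hw => ?_⟩
    exact not_lt.1 (wellFounded_lt.not_lt_min _ hw)
  obtain ⟨g1, g2⟩ := lad_good ⟨a, ha, hv⟩
  have hlt : ∀ y, y < v → f y < v := by
    intro y hy
    obtain ⟨_, ⟨k, rfl⟩, hk⟩ := (lt_isLUB_iff hv).1 hy
    have : f y < a (k+1) := by rw [ha1]; exact hf hk
    exact lt_of_lt_of_le this (hv.1 ⟨_, rfl⟩)
  have e1 : ∀ n, f (lad v n) = lad (f v) n := fun n => hl v n (g1 n)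
  have good : ∃ a : ℕ → V, StrictMono a ∧ IsLUB (range a) (f v) := by
    by_contra hcon
    have h0 := e1 0
    rw [show lad (f v) 0 = f v from dif_neg hcon] at h0
    exact absurd (hf.injective h0) (g1 0).ne
  have hfv : f v = v := by
    apply le_antisymm _ hf.le_apply
    apply (lad_good good).2.2
    rintro _ ⟨n, rfl⟩
    rw [← e1]; exact (hlt _ (g1 n)).le
  rw [hfv] at e1
  have hxv : x < v := lt_of_lt_of_le (ha (Nat.zero_lt_one)) (hv.1 ⟨_, rfl⟩)
  obtain ⟨_, ⟨n, rfl⟩, hn⟩ := (lt_isLUB_iff g2).1 hxv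
  have hk : ∀ k, a k < lad v n := by
    intro k
    induction k with
    | zero => exact hn
    | succ k ih => rw [ha1, ← e1 n]; exact hf ih
  have : v ≤ lad v n := hv.2 (by rintro _ ⟨k, rfl⟩; exact (hk k).le)
  exact absurd (g1 n) (not_lt.2 this)

open Classical in
/-- Gluing data from a predicate. -/
noncomputable def pcode {V : Type*} (S : V × V → Prop) (d : V) (p : V × V) : V ⊕ (V × V) :=
  if S p then Sum.inl d else Sum.inr p

theorem pcode_eq {V : Type*} {S : V × V → Prop} {d : V} {p p' : V × V} (hne : p ≠ p')
    (h : pcode S d p = pcode S d p') : S p := by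
  by_contra hp
  unfold pcode at h
  rw [if_neg hp] at h
  split_ifs at h with h'
  simp only [Sum.inr.injEq] at h
  exact hne h

theorem pcode_of {V : Type*} {S : V × V → Prop} {d : V} {p p' : V × V} (h : S p) (hp2 : S p') :
    pcode S d p = pcode S d p' := by
  simp [pcode, h, hp2]

/-- The countably many gluing functions. -/
noncomputable def code {V : Type*} [LinearOrder V] (q : V) : ℕ → V × V → V ⊕ (V × V)
  | 0 => fun p => Sum.inl p.1
  | 1 => fun p => Sum.inl p.2
  | 2 => pcode (fun p => p.1 = p.2) q
  | 3 => pcode (fun p => p.1 ≤ p.2) q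
  | 4 => pcode (fun p => p.1 = q) q
  | (n+5) => pcode (fun p => p.1 = p.2 ∨ p.1 = lad p.2 n) q

theorem code_rigid {V : Type*} [LinearOrder V] [WellFoundedLT V] [OrderTop V] [Nontrivial V]
    (q q' : V) (F : V × V → V × V) (hF : Function.Injective F)
    (h : ∀ n p p', code q n p = code q n p' → code q' n (F p) = code q' n (F p')) : q = q' := by
  have key : ∀ (n : ℕ) (S S' : V × V → Prop), code q n = pcode S q → code q' n = pcode S' q' →
      ∀ p p', p ≠ p' → S p → S p' → S' (F p) := by
    intro n S S' e e' p p' hne hp hp'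
    have h1 := h n p p' (by rw [e]; exact pcode_of hp hp')
    rw [e'] at h1
    exact pcode_eq (fun e => hne (hF e)) h1
  let a : V → V := fun x => (F (x, x)).1
  have hdiag : ∀ x, (F (x, x)).1 = (F (x, x)).2 := by
    intro x
    obtain ⟨y, hy⟩ := exists_ne x
    exact key 2 _ _ rfl rfl (x, x) (y, y) (by simpa using hy.symm) rfl rfl
  have hFa : ∀ x y, F (x, y) = (a x, a y) := by
    intro x y
    have h0 := h 0 (x, y) (x, x) rfl
    have h1 := h 1 (x, y) (y, y) rfl
    simp only [code, Sum.inl.injEq] at h0 h1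
    ext
    · exact h0
    · rw [h1]; exact (hdiag y).symm
  have hinj : Function.Injective a := by
    intro x y e
    have : F (x, x) = F (y, y) := by rw [hFa, hFa, e]
    exact (Prod.mk.inj (hF this)).1
  have hmono : StrictMono a := by
    intro x y hxy
    have := key 3 _ _ rfl rfl (x, y) (x, x) (by simpa using hxy.ne') hxy.le le_rfl
    simp only [hFa] at this
    exact lt_of_le_of_ne this (fun e => hxy.ne (hinj e))
  have hid : ∀ x, a x = x := by
    apply rigid a hmono
    intro v n hv
    have := key (n+5) _ _ rfl rfl (lad v n, v) (v, v) (by simpa using hv.ne) (Or.inr rfl) (Or.inl rfl)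
    simp only [hFa] at this
    rcases this with e | e
    · exact absurd (hinj e) hv.ne
    · exact e
  obtain ⟨y, hy⟩ := exists_ne q
  have := key 4 _ _ rfl rfl (q, q) (q, y) (by simpa using hy.symm) rfl rfl
  simpa only [hFa, hid] using this

theorem parity (π : ℕ → ℕ) (hinj : Function.Injective π) (hr : range π = {n | 1 ≤ n})
    (N : ℕ) (hN : ∀ m, N ≤ m → π (2*m) / 2 = π (2*m+1) / 2) : False := by
  classical
  let T : Finset ℕ := insert 0 ((Finset.range (2*N)).image π)
  have h0 : ∀ n, π n ≠ 0 := by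
    intro n e
    have : π n ∈ range π := ⟨n, rfl⟩
    rw [hr] at this
    change 1 ≤ π n at this
    omega
  have hcard : T.card = 2*N+1 := by
    rw [Finset.card_insert_of_notMem, Finset.card_image_of_injective _ hinj, Finset.card_range]
    simp only [Finset.mem_image, not_exists, not_and]
    intro n _; exact h0 n
  have hT : ∀ t, t ∉ T ↔ ∃ n, 2*N ≤ n ∧ π n = t := by
    intro t
    constructor
    · intro ht
      have ht0 : t ≠ 0 := by rintro rfl; exact ht (Finset.mem_insert_self _ _)
      have : t ∈ range π := by rw [hr]; exact Nat.one_le_iff_ne_zero.2 ht0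
      obtain ⟨n, rfl⟩ := this
      refine ⟨n, ?_, rfl⟩
      by_contra hlt
      exact ht (Finset.mem_insert_of_mem (Finset.mem_image_of_mem _ (Finset.mem_range.2 (by omega))))
    · rintro ⟨n, hn, rfl⟩ ht
      rcases Finset.mem_insert.1 ht with h | h
      · exact h0 n h
      · obtain ⟨m, hm, e⟩ := Finset.mem_image.1 h
        have := hinj e
        have := Finset.mem_range.1 hm
        omega
  let g : ℕ → ℕ := fun t => if t % 2 = 0 then t + 1 else t - 1
  have gg : ∀ t, g (g t) = t := by
    intro t; simp only [g]; split_ifs <;> omega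
  have gout : ∀ t, t ∉ T → g t ∉ T := by
    intro t ht
    obtain ⟨n, hn, rfl⟩ := (hT t).1 ht
    rw [hT]
    obtain ⟨m, hm⟩ : ∃ m, n = 2*m ∨ n = 2*m+1 := ⟨n/2, by omega⟩
    have hmN : N ≤ m := by omega
    have e := hN m hmN
    have hne : π (2*m) ≠ π (2*m+1) := fun e => by have := hinj e; omega
    rcases hm with rfl | rfl
    · refine ⟨2*m+1, by omega, ?_⟩
      simp only [g]; split_ifs <;> omega
    · refine ⟨2*m, by omega, ?_⟩
      simp only [g]; split_ifs <;> omega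
  have gin : ∀ t ∈ T, g t ∈ T := by
    intro t ht
    by_contra h
    have := gout _ h
    rw [gg] at this
    exact this ht
  have hs : ∑ x ∈ T, (1 : ZMod 2) = 0 := by
    refine Finset.sum_involution (fun a _ => g a) ?_ ?_ ?_ ?_
    · intro a _; decide
    · intro a _ _; simp only [g]; split_ifs <;> omega
    · exact gin
    · intro a _; exact gg a
  rw [Finset.sum_const, hcard, nsmul_eq_mul, mul_one] at hs
  have : (2*N+1 : ℕ) % 2 = 0 := by
    have := (ZMod.natCast_eq_zero_iff (2*N+1) 2).1 hs
    omega
  omega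
end S10
namespace S10
open Set Filter Topology

/-- The ambient Polish space. -/
abbrev YY : Type := ℤ → ℝ

/-- The gluing points. -/
def kpt (n : ℕ) : YY := fun i => if i = 0 then (n : ℝ) else 0

theorem mk_YY : #YY = 𝔠 := by
  simp [YY, Cardinal.mk_real]

theorem rank_YY : 1 < Module.rank ℝ YY := by
  have h : LinearIndependent ℝ (fun i : Fin 2 => (Pi.single (i : ℤ) (1 : ℝ) : YY)) := by
    have := (Pi.linearIndependent_single_one ℤ ℝ)
    exact this.comp (fun i : Fin 2 => ((i : ℕ) : ℤ)) (by intro a b; simp [Fin.ext_iff])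
  have := h.cardinal_le_rank
  simp only [Cardinal.mk_fin, Nat.cast_ofNat] at this
  exact lt_of_lt_of_le (by norm_num) this

theorem closed_card {F : Set YY} (hF : IsClosed F) (hc : ¬ F.Countable) : 𝔠 ≤ #F := by
  obtain ⟨f, hf, -, hi⟩ := hF.exists_nat_bool_injection_of_not_countable hc
  have : #(ℕ → Bool) ≤ #F :=
    Cardinal.mk_le_of_injective (f := fun x => (⟨f x, hf ⟨x, rfl⟩⟩ : F))
      (fun a b e => hi (congrArg Subtype.val e))
  simpa using this

/-- The basic tasks. -/
def task : (Set (TopologicalSpace.countableBasis YY) × ℝ) ⊕ (ℕ → YY) → YY → YY → Prop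
  | Sum.inl p => fun x _ => x ∈ (⋃₀ (Subtype.val '' p.1))ᶜ
  | Sum.inr g => fun x z =>
      Tendsto g (comap (TopologicalSpace.denseSeq YY) (𝓝 x)) (𝓝 z)

theorem mk_tasks :
    #((Set (TopologicalSpace.countableBasis YY) × ℝ) ⊕ (ℕ → YY)) ≤ 𝔠 := by
  have h1 : #(Set (TopologicalSpace.countableBasis YY)) ≤ 𝔠 := by
    rw [Cardinal.mk_set, ← Cardinal.two_power_aleph0]
    apply Cardinal.power_le_power_left two_ne_zero
    exact Cardinal.mk_le_aleph0_iff.2 (TopologicalSpace.countable_countableBasis YY).to_subtype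
  have h2 : #(ℕ → YY) ≤ 𝔠 := by
    simp [Cardinal.mk_real]
  rw [Cardinal.mk_sum, Cardinal.mk_prod]
  simp only [Cardinal.lift_id, Cardinal.mk_real]
  calc _ ≤ 𝔠 * 𝔠 + 𝔠 := by gcongr
    _ = 𝔠 := by simp

theorem exists_notMem_of_lt {S : Set YY} (hS : 𝔠 ≤ #S) (A : Set YY) (hA : #A < 𝔠) :
    ∃ x ∈ S, x ∉ A := by
  by_contra h
  push Not at h
  exact absurd (lt_of_le_of_lt (hS.trans (Cardinal.mk_le_mk_of_subset h)) hA) (lt_irrefl _)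

theorem exists_K : ∃ K : Set YY, (∀ n, kpt n ∈ K) ∧
    (∀ C : Set K, C.Countable → IsPreconnected Cᶜ) ∧
    (∀ C : Set K, C.Countable → Dense Cᶜ) ∧
    (∀ f : K → K, Continuous f → Function.Injective f → ∀ x, f x = x) ∧
    (∀ F : Set YY, IsClosed F → ¬ F.Countable → (K ∩ F).Nonempty) := by
  classical
  set d := TopologicalSpace.denseSeq YY with hd
  have dd : DenseRange d := TopologicalSpace.denseRange_denseSeq YY
  obtain ⟨K, X, Z, hDK, hXi, hXZ⟩ := diag
    (T := {t // Big (task t)}) ((Cardinal.mk_subtype_le _).trans mk_tasks)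
    (fun t => task t.1) (range d ∪ range kpt)
    ((countable_range _).union (countable_range _)) (fun t => t.2)
  -- closed sets
  have hcl : ∀ F : Set YY, IsClosed F → ¬ F.Countable → 𝔠 ≤ #(K ∩ F : Set YY) := by
    intro F hF hc
    obtain ⟨S, hS, hFS⟩ :=
      (TopologicalSpace.isBasis_countableBasis YY).open_eq_sUnion hF.isOpen_compl
    let S' : Set (TopologicalSpace.countableBasis YY) := Subtype.val ⁻¹' S
    have hS' : (⋃₀ (Subtype.val '' S'))ᶜ = F := by
      rw [Subtype.image_preimage_coe, inter_eq_right.2 hS, ← hFS, compl_compl]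
    have hbig : ∀ r : ℝ, Big (task (Sum.inl (S', r))) := by
      intro r A B hA hB
      obtain ⟨x, hx, hxA⟩ := exists_notMem_of_lt (closed_card hF hc) A hA
      have : #(B ∪ {x} : Set YY) < 𝔠 :=
        lt_of_le_of_lt (Cardinal.mk_union_le _ _) (Cardinal.add_lt_of_lt
          Cardinal.aleph0_le_continuum hB (by simpa using Cardinal.one_lt_aleph0.trans Cardinal.aleph0_lt_continuum))
      obtain ⟨z, -, hz⟩ := exists_notMem_of_lt (S := univ) (by simp [Cardinal.mk_real]) _ this
      refine ⟨x, z, ?_, hxA, fun h => hz (Or.inl h), fun h => hz (Or.inr h.symm)⟩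
      change x ∈ (⋃₀ (Subtype.val '' S'))ᶜ
      rw [hS']; exact hx
    have : #ℝ ≤ #(K ∩ F : Set YY) := by
      refine Cardinal.mk_le_of_injective (f := fun r : ℝ =>
        (⟨X ⟨_, hbig r⟩, (hXZ ⟨_, hbig r⟩).2.1, ?_⟩ : (K ∩ F : Set YY))) ?_
      · rw [← hS']; exact (hXZ ⟨_, hbig r⟩).1
      · intro r r' e
        have := hXi (congrArg Subtype.val e)
        simpa using this
    simpa [Cardinal.mk_real] using this
  have hopen : ∀ O : Set YY, IsOpen O → O.Nonempty → 𝔠 ≤ #(K ∩ O : Set YY) := by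
    rintro O hO ⟨p, hp⟩
    obtain ⟨F, hFp, hFc, hFO⟩ := exists_mem_nhds_isClosed_subset (hO.mem_nhds hp)
    have h1 : ¬ F.Countable := by
      intro hc
      have h2 := continuum_le_cardinal_of_isOpen ℝ (isOpen_interior (s := F))
        ⟨p, mem_interior_iff_mem_nhds.2 hFp⟩
      have h3 := Cardinal.le_aleph0_iff_set_countable.2 (hc.mono interior_subset)
      exact absurd (h2.trans h3) (not_le.2 Cardinal.aleph0_lt_continuum)
    exact (hcl F hFc h1).trans (Cardinal.mk_le_mk_of_subset (inter_subset_inter_right _ hFO))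
  have hbigc : ∀ S C : Set YY, 𝔠 ≤ #S → C.Countable → ∃ x ∈ S, x ∉ C := fun S C hS hC =>
    exists_notMem_of_lt hS C (lt_of_le_of_lt (Cardinal.le_aleph0_iff_set_countable.2 hC)
      Cardinal.aleph0_lt_continuum)
  refine ⟨K, fun n => hDK (Or.inr ⟨n, rfl⟩), ?_, ?_, ?_, ?_⟩
  · intro C hC
    rw [← Topology.IsInducing.subtypeVal.isPreconnected_image]
    have hC' : (Subtype.val '' C).Countable := hC.image _
    have hmem : ∀ x, x ∈ Subtype.val '' Cᶜ ↔ x ∈ K ∧ x ∉ Subtype.val '' C := by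
      intro x; constructor
      · rintro ⟨y, hy, rfl⟩
        exact ⟨y.2, fun ⟨z, hz, e⟩ => hy (Subtype.ext e ▸ hz)⟩
      · rintro ⟨h1, h2⟩
        exact ⟨⟨x, h1⟩, fun h => h2 ⟨_, h, rfl⟩, rfl⟩
    intro U V hU hV hUV ⟨u, hu, huU⟩ ⟨v, hv, hvV⟩
    by_contra hne
    rw [not_nonempty_iff_eq_empty] at hne
    have hdisj : ¬ (U ∩ V).Nonempty := by
      intro hn
      obtain ⟨x, ⟨hxK, hx⟩, hxC⟩ := hbigc _ _ (hopen _ (hU.inter hV) hn) hC'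
      have : x ∈ Subtype.val '' Cᶜ ∩ (U ∩ V) := ⟨(hmem x).2 ⟨hxK, hxC⟩, hx⟩
      rw [hne] at this; exact this
    have hFc : IsClosed (U ∪ V)ᶜ := (hU.union hV).isClosed_compl
    by_cases hc : ((U ∪ V)ᶜ).Countable
    · have hp := (hc.isPathConnected_compl_of_one_lt_rank rank_YY).isConnected.isPreconnected
      rw [compl_compl] at hp
      obtain ⟨x, -, hx⟩ := hp U V hU hV subset_rfl ⟨u, Or.inl huU, huU⟩ ⟨v, Or.inr hvV, hvV⟩
      exact hdisj ⟨x, hx⟩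
    · obtain ⟨x, ⟨hxK, hx⟩, hxC⟩ := hbigc _ _ (hcl _ hFc hc) hC'
      exact hx (hUV ((hmem x).2 ⟨hxK, hxC⟩))
  · intro C hC
    rw [dense_iff_inter_open]
    rintro U hU ⟨p, hp⟩
    obtain ⟨O, hO, rfl⟩ := isOpen_induced_iff.1 hU
    obtain ⟨x, ⟨hxK, hx⟩, hxC⟩ := hbigc _ _ (hopen O hO ⟨p, hp⟩) (hC.image Subtype.val)
    exact ⟨⟨x, hxK⟩, hx, fun h => hxC ⟨_, h, rfl⟩⟩
  · intro f hf hfi x0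
    by_contra hx0
    have hdK : ∀ n, d n ∈ K := fun n => hDK (Or.inl ⟨n, rfl⟩)
    let g : ℕ → YY := fun n => f ⟨d n, hdK n⟩
    have hlim : ∀ x : K, Tendsto g (comap d (𝓝 (x : YY))) (𝓝 (f x : YY)) := by
      intro x
      have h1 : Tendsto (fun n => (⟨d n, hdK n⟩ : K)) (comap d (𝓝 (x : YY))) (𝓝 x) := by
        rw [tendsto_subtype_rng]
        exact tendsto_comap
      exact ((continuous_subtype_val.comp hf).tendsto x).comp h1
    have hU : IsOpen {x : K | f x ≠ x} := isOpen_ne_fun hf continuous_id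
    obtain ⟨O, hO, hOU⟩ := isOpen_induced_iff.1 hU
    have hx0O : (x0 : YY) ∈ O := by
      have : x0 ∈ Subtype.val ⁻¹' O := by rw [hOU]; exact hx0
      exact this
    have hcard := hopen O hO ⟨_, hx0O⟩
    have hbig : Big (task (Sum.inr g)) := by
      intro A B hA hB
      have hB' : #((fun x : K => (x : YY)) '' {x : K | (f x : YY) ∈ B}) < 𝔠 := by
        refine lt_of_le_of_lt Cardinal.mk_image_le (lt_of_le_of_lt ?_ hB)
        refine Cardinal.mk_le_of_injective (f := fun x : {x : K | (f x : YY) ∈ B} =>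
          (⟨f x.1, x.2⟩ : B)) ?_
        intro a b e
        have e' : (f a.1 : YY) = f b.1 := congrArg (fun z : B => (z : YY)) e
        exact Subtype.ext (hfi (Subtype.ext e'))
      obtain ⟨x, ⟨hxK, hxO⟩, hx⟩ := exists_notMem_of_lt hcard _
        (lt_of_le_of_lt (Cardinal.mk_union_le _ _)
          (Cardinal.add_lt_of_lt Cardinal.aleph0_le_continuum hA hB'))
      refine ⟨x, f ⟨x, hxK⟩, hlim ⟨x, hxK⟩, fun h => hx (Or.inl h), fun h => hx (Or.inr ?_), ?_⟩
      · exact ⟨⟨x, hxK⟩, h, rfl⟩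
      · intro e
        have : (⟨x, hxK⟩ : K) ∈ Subtype.val ⁻¹' O := hxO
        rw [hOU] at this
        exact this (Subtype.ext e.symm)
    obtain ⟨h1, h2, h3⟩ := hXZ ⟨_, hbig⟩
    have hnb : (comap d (𝓝 (X ⟨_, hbig⟩))).NeBot := by
      rw [comap_neBot_iff]
      intro t ht
      obtain ⟨_, hy, ⟨n, rfl⟩⟩ := mem_closure_iff_nhds.1 (dd (X ⟨_, hbig⟩)) t ht
      exact ⟨n, hy⟩
    have := tendsto_nhds_unique (hlim ⟨_, h2⟩) h1
    rw [← this] at h3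
    exact h3 (f _).2
  · intro F hF hc
    obtain ⟨x, hx, -⟩ := hbigc _ ∅ (hcl F hF hc) countable_empty
    exact ⟨x, hx⟩
end S10
namespace S10
open Set Filter Topology

/-- The properties of the rigid connected set. -/
structure Good (K : Set YY) : Prop where
  kpt_mem : ∀ n, kpt n ∈ K
  conn : ∀ C : Set K, C.Countable → IsPreconnected Cᶜ
  dense : ∀ C : Set K, C.Countable → Dense Cᶜ
  rig : ∀ f : K → K, Continuous f → Function.Injective f → ∀ x, f x = x
  hit : ∀ F : Set YY, IsClosed F → ¬ F.Countable → (K ∩ F).Nonempty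

theorem exists_good : ∃ K : Set YY, Good K := by
  obtain ⟨K, h1, h2, h3, h4, h5⟩ := exists_K
  exact ⟨K, ⟨h1, h2, h3, h4, h5⟩⟩

theorem Good.preconn {K : Set YY} (hK : Good K) : PreconnectedSpace K :=
  ⟨by simpa using hK.conn ∅ countable_empty⟩

theorem Good.const {K : Set YY} (hK : Good K) {φ : K → ℝ} (hφ : Continuous φ) {S : Set ℝ}
    (hS : S.Countable) (h : ∀ x, φ x ∈ S) (x y : K) : φ x = φ y := by
  haveI := hK.preconn
  exact hS.isTotallyDisconnected (range φ) (by rintro _ ⟨x, rfl⟩; exact h x)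
    (isPreconnected_range hφ) ⟨x, rfl⟩ ⟨y, rfl⟩

/-- Shift. -/
def sh (m : ℕ) (y : YY) : YY := fun i => y (i + m)

theorem continuous_sh (m : ℕ) : Continuous (sh m) :=
  continuous_pi fun i => continuous_apply (i + (m : ℤ))

/-- The Cantor cube. -/
def cube : Set YY := {z | ∀ i, z i = 0 ∨ z i = 1}

/-- The points on the isolated leaves. -/
noncomputable def Apt {K : Set YY} (n : ℕ) (y : K) : K × YY × ℝ :=
  (y, sh (n / 2) y, (1 / 2 : ℝ) ^ n)

theorem continuous_Apt {K : Set YY} (n : ℕ) : Continuous (Apt (K := K) n) := by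
  refine Continuous.prodMk continuous_id (Continuous.prodMk ?_ continuous_const)
  exact (continuous_sh _).comp continuous_subtype_val

/-- The basic spaces violating Cantor-Bernstein. -/
def PS (K : Set YY) (s : ℕ) : Set (K × YY × ℝ) :=
  {p | (p.2.1 ∈ cube ∧ p.2.2 = 0) ∨ ∃ n, s ≤ n ∧ p = Apt n p.1}

theorem Apt_mem {K : Set YY} {s n : ℕ} (h : s ≤ n) (y : K) : Apt n y ∈ PS K s :=
  Or.inr ⟨n, h, rfl⟩

theorem J_mem {K : Set YY} (s : ℕ) {j : YY} (h : j ∈ cube) (y : K) :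
    ((y, j, 0) : K × YY × ℝ) ∈ PS K s :=
  Or.inl ⟨h, rfl⟩

theorem half_inj {m n : ℕ} (h : (1 / 2 : ℝ) ^ m = (1 / 2 : ℝ) ^ n) : m = n :=
  pow_right_injective₀ (by norm_num) (by norm_num) h

theorem P_struct {K : Set YY} (hK : Good K) (s : ℕ) (f : K → PS K s) (hf : Continuous f)
    (hi : Function.Injective f) :
    (∃ n, s ≤ n ∧ ∀ y, (f y).1 = Apt n y) ∨ ∃ j ∈ cube, ∀ y, (f y).1 = (y, j, 0) := by
  have hf' : Continuous (fun y => (f y).1) := continuous_subtype_val.comp hf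
  let x0 : K := ⟨kpt 0, hK.kpt_mem 0⟩
  have hh : ∀ x y, (f x).1.2.2 = (f y).1.2.2 := by
    apply hK.const (S := insert 0 (range fun n : ℕ => (1 / 2 : ℝ) ^ n))
      (continuous_snd.comp (continuous_snd.comp hf')) ((countable_range _).insert _)
    intro x
    rcases (f x).2 with h | ⟨n, -, h⟩
    · exact Or.inl h.2
    · exact Or.inr ⟨n, by simp only [Function.comp]; rw [h]; rfl⟩
  have hg : Continuous (fun y => (f y).1.1) := continuous_fst.comp hf'
  rcases (f x0).2 with h0 | ⟨n, hn, h0⟩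
  · right
    have hz : ∀ x, (f x).1.2.2 = 0 := fun x => (hh x x0).trans h0.2
    have hc : ∀ x, (f x).1.2.1 ∈ cube := by
      intro x
      rcases (f x).2 with h | ⟨m, -, h⟩
      · exact h.1
      · exfalso
        have := hz x
        rw [h] at this
        simp [Apt] at this
    have hcc : ∀ x, (f x).1.2.1 = (f x0).1.2.1 := by
      intro x; funext i
      refine hK.const (S := {0, 1}) (φ := fun x => (f x).1.2.1 i)
        ((continuous_apply i).comp (continuous_fst.comp (continuous_snd.comp hf')))
        (by simp) ?_ x x0
      intro x; exact hc x i
    have hid := hK.rig _ hg (by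
      intro a b e
      apply hi; apply Subtype.ext
      refine Prod.ext e (Prod.ext ?_ ?_)
      · rw [hcc a, hcc b]
      · rw [hz a, hz b])
    exact ⟨_, h0.1, fun y => Prod.ext (hid y) (Prod.ext (hcc y) (hz y))⟩
  · left
    have hz : ∀ x, (f x).1.2.2 = (1 / 2 : ℝ) ^ n := by
      intro x; rw [hh x x0, h0]; rfl
    have hA : ∀ x, (f x).1 = Apt n (f x).1.1 := by
      intro x
      rcases (f x).2 with h | ⟨m, -, h⟩
      · exfalso
        have := hz x
        rw [h.2] at this
        have h2 : (1 / 2 : ℝ) ^ n ≠ 0 := by positivity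
        exact h2 this.symm
      · have h1 := hz x
        rw [h] at h1
        have := half_inj h1
        rw [this] at h; exact h
    have hid := hK.rig _ hg (by
      intro a b e
      apply hi; apply Subtype.ext
      rw [hA a, hA b]; exact congrArg _ e)
    refine ⟨n, hn, fun y => ?_⟩
    rw [hA y]; exact congrArg _ (hid y)

theorem P_homeoA {K : Set YY} (hK : Good K) {s s' : ℕ} (F : PS K s ≃ₜ PS K s') (n : ℕ)
    (hn : s ≤ n) : ∃ m, s' ≤ m ∧ ∀ y, (F ⟨Apt n y, Apt_mem hn y⟩).1 = Apt m y := by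
  rcases P_struct hK s' (fun y => F ⟨Apt n y, Apt_mem hn y⟩)
    (F.continuous.comp ((continuous_Apt n).subtype_mk _)) (by
      intro a b e
      have := congrArg (fun z : PS K s => z.1.1) (F.injective e)
      exact this) with h | ⟨j, hj, h⟩
  · exact h
  · exfalso
    let y0 : K := ⟨kpt 0, hK.kpt_mem 0⟩
    -- approximate j
    let jj : ℕ → YY := fun k => Function.update j (k : ℤ) (1 - j k)
    have hjc : ∀ k, jj k ∈ cube := by
      intro k i
      by_cases hi : i = k
      · subst hi
        simp only [jj, Function.update_self]
        rcases hj k with e | e <;> rw [e] <;> simp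
      · simp only [jj, Function.update_of_ne hi]; exact hj i
    have hjn : ∀ k, jj k ≠ j := by
      intro k e
      have := congrFun e (k : ℤ)
      simp only [jj, Function.update_self] at this
      rcases hj k with e | e <;> rw [e] at this <;> norm_num at this
    have hjl : Tendsto jj atTop (𝓝 j) := by
      rw [tendsto_pi_nhds]
      intro i
      apply tendsto_const_nhds.congr'
      filter_upwards [eventually_gt_atTop i.toNat] with k hk
      simp only [jj]
      rw [Function.update_of_ne]
      omega
    have hlim : Tendsto (fun k => (⟨(y0, jj k, 0), J_mem s' (hjc k) y0⟩ : PS K s')) atTop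
        (𝓝 ⟨(y0, j, 0), J_mem s' hj y0⟩) := by
      rw [tendsto_subtype_rng]
      exact tendsto_const_nhds.prodMk_nhds (hjl.prodMk_nhds tendsto_const_nhds)
    have hback : F.symm ⟨(y0, j, 0), J_mem s' hj y0⟩ = ⟨Apt n y0, Apt_mem hn y0⟩ := by
      rw [Homeomorph.symm_apply_eq]
      exact Subtype.ext (h y0).symm
    have hlim2 := (F.symm.continuous.tendsto _).comp hlim
    rw [hback] at hlim2
    have hlim3 : Tendsto (fun k => (F.symm ⟨(y0, jj k, 0), J_mem s' (hjc k) y0⟩).1.2.2) atTop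
        (𝓝 ((1 / 2 : ℝ) ^ n)) :=
      ((continuous_snd.comp (continuous_snd.comp continuous_subtype_val)).tendsto _).comp hlim2
    have hev := hlim3.eventually (Ioo_mem_nhds (a := (1 / 2 : ℝ) ^ (n + 1))
      (b := (1 / 2 : ℝ) ^ n * 2) (by
        rw [pow_succ]; have : (0 : ℝ) < (1 / 2) ^ n := by positivity
        linarith) (by have : (0 : ℝ) < (1 / 2) ^ n := by positivity
                      linarith))
    obtain ⟨k, hk1, hk2⟩ := hev.exists
    set p := F.symm ⟨(y0, jj k, 0), J_mem s' (hjc k) y0⟩ with hp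
    have hpA : p.1 = Apt n p.1.1 := by
      rcases p.2 with e | ⟨m, -, e⟩
      · rw [e.2] at hk1
        have : (0 : ℝ) < (1 / 2) ^ (n+1) := by positivity
        linarith
      · have e2 : p.1.2.2 = (1 / 2 : ℝ) ^ m := by rw [e]; rfl
        rw [e2] at hk1 hk2
        have h1 : m < n + 1 := (pow_lt_pow_iff_right_of_lt_one₀ (by norm_num) (by norm_num)).1 hk1
        have h2 : n < m + 1 := by
          apply (pow_lt_pow_iff_right_of_lt_one₀ (a := (1 / 2 : ℝ)) (by norm_num) (by norm_num)).1
          rw [pow_succ]; linarith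
        have : m = n := by omega
        rw [this] at e; exact e
    have hFp : F p = ⟨(y0, jj k, 0), J_mem s' (hjc k) y0⟩ := by simp [hp]
    have hp2 : p = ⟨Apt n p.1.1, Apt_mem hn _⟩ := Subtype.ext hpA
    have h5 := h p.1.1
    rw [← hp2, hFp] at h5
    exact hjn k (Prod.mk.inj (Prod.mk.inj h5).2).1

theorem P_homeoJ {K : Set YY} (hK : Good K) {s s' : ℕ} (F : PS K s ≃ₜ PS K s') (j : YY)
    (hj : j ∈ cube) : ∃ j' ∈ cube, ∀ y, (F ⟨(y, j, 0), J_mem s hj y⟩).1 = (y, j', 0) := by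
  rcases P_struct hK s' (fun y => F ⟨(y, j, 0), J_mem s hj y⟩)
    (F.continuous.comp (Continuous.subtype_mk (by fun_prop) _)) (by
      intro a b e
      have := congrArg (fun z : PS K s => z.1.1) (F.injective e)
      exact this) with ⟨m, hm, h⟩ | h
  · exfalso
    obtain ⟨n, hn, h2⟩ := P_homeoA hK F.symm m hm
    let y0 : K := ⟨kpt 0, hK.kpt_mem 0⟩
    have e1 : F ⟨(y0, j, 0), J_mem s hj y0⟩ = ⟨Apt m y0, Apt_mem hm y0⟩ := Subtype.ext (h y0)
    have e2 := h2 y0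
    rw [← e1, F.symm_apply_apply] at e2
    have : (0 : ℝ) = (1 / 2) ^ n := congrArg (fun z => z.2.2) e2
    have h3 : (1 / 2 : ℝ) ^ n ≠ 0 := by positivity
    exact h3 this.symm
  · exact h

theorem isCompact_cube : IsCompact cube := by
  have : cube = Set.pi univ (fun _ => ({0, 1} : Set ℝ)) := by
    ext z; simp [cube]
  rw [this]
  exact isCompact_univ_pi fun _ => (Set.toFinite _).isCompact

theorem exists_test {K : Set YY} (hK : Good K) (a b : ℕ → ℕ) (hab : ∀ i k, a i ≠ b k) :
    ∃ y ∈ K, y ∈ cube ∧ (∀ i, y (a i) = 0) ∧ ∀ i, y (b i) = 1 := by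
  classical
  let F : Set YY := cube ∩ ({y | ∀ i, y (a i) = 0} ∩ {y | ∀ i, y (b i) = 1})
  have hF : IsClosed F := by
    refine isCompact_cube.isClosed.inter (IsClosed.inter ?_ ?_)
    · have : {y : YY | ∀ i, y (a i) = 0} = ⋂ i, {y : YY | y (a i) = 0} := by ext; simp
      rw [this]
      exact isClosed_iInter fun i => isClosed_eq (continuous_apply _) continuous_const
    · have : {y : YY | ∀ i, y (b i) = 1} = ⋂ i, {y : YY | y (b i) = 1} := by ext; simp
      rw [this]
      exact isClosed_iInter fun i => isClosed_eq (continuous_apply _) continuous_const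
  have hFu : ¬ F.Countable := by
    intro hc
    let φ : (ℕ → Bool) → YY := fun g i =>
      if i < 0 then (if g i.natAbs then 1 else 0) else (if ∃ k, i = (b k : ℤ) then 1 else 0)
    have hφ : ∀ g, φ g ∈ F := by
      intro g
      refine ⟨?_, ?_, ?_⟩
      · intro i; simp only [φ]; split_ifs <;> simp
      · intro i
        simp only [φ]
        rw [if_neg (by omega), if_neg]
        rintro ⟨k, e⟩
        exact hab i k (by exact_mod_cast e)
      · intro i
        simp only [φ]
        rw [if_neg (by omega), if_pos ⟨i, rfl⟩]
    have hc2 : (range (fun g : ℕ → Bool => φ (fun n => g (n - 1)))).Countable :=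
      hc.mono (by rintro _ ⟨g, rfl⟩; exact hφ (fun n => g (n - 1)))
    have hv : ∀ g : ℕ → Bool, ∀ n : ℕ,
        φ (fun n => g (n - 1)) (-(n + 1 : ℤ)) = if g n then 1 else 0 := by
      intro g n
      have h3 : (-(n + 1 : ℤ)).natAbs - 1 = n := by omega
      have h4 : (-(n + 1 : ℤ)) < 0 := by omega
      simp only [φ]
      rw [if_pos h4]
      simp only [h3]
    have hinj : Function.Injective (fun g : ℕ → Bool => φ (fun n => g (n - 1))) := by
      intro g g' e
      funext n
      have this : φ (fun n => g (n - 1)) (-(n + 1 : ℤ)) = φ (fun n => g' (n - 1)) (-(n + 1 : ℤ)) :=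
        congrFun e _
      rw [hv, hv] at this
      cases h1 : g n <;> cases h2 : g' n <;> simp_all
    have h4 : Countable (ℕ → Bool) := by
      have := hc2.to_subtype
      exact (Equiv.ofInjective _ hinj).injective.countable
    have h5 := Cardinal.mk_le_aleph0_iff.2 h4
    simp only [Cardinal.mk_pi, Cardinal.prod_const] at h5
    simp at h5
    exact absurd h5 (not_le.2 Cardinal.aleph0_lt_continuum)
  obtain ⟨y, hyK, hy1, hy2, hy3⟩ := hK.hit F hF hFu
  exact ⟨y, hyK, hy1, hy2, hy3⟩

theorem P_not_homeo {K : Set YY} (hK : Good K) (F : PS K 0 ≃ₜ PS K 1) : False := by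
  choose π hπ1 hπ using fun n => P_homeoA hK F n (Nat.zero_le n)
  choose ρ hρ1 hρ using fun n : ℕ => fun hn : 1 ≤ n => P_homeoA hK F.symm n hn
  let y0 : K := ⟨kpt 0, hK.kpt_mem 0⟩
  have Ainj : ∀ {m n : ℕ}, Apt m y0 = Apt n y0 → m = n := fun e =>
    half_inj (congrArg (fun z => z.2.2) e)
  have hinj : Function.Injective π := by
    intro m n e
    have h1 := hπ m y0
    rw [e, ← hπ n y0] at h1
    exact Ainj (congrArg Subtype.val (F.injective (Subtype.ext h1)))
  have hrange : range π = {n | 1 ≤ n} := by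
    ext m
    constructor
    · rintro ⟨n, rfl⟩; exact hπ1 n
    · intro hm
      refine ⟨ρ m hm, ?_⟩
      have h1 := hρ m hm y0
      have h2 := hπ (ρ m hm) y0
      have h3 : (⟨Apt (ρ m hm) y0, Apt_mem (Nat.zero_le _) y0⟩ : PS K 0)
          = F.symm ⟨Apt m y0, Apt_mem hm y0⟩ := Subtype.ext h1.symm
      rw [h3, F.apply_symm_apply] at h2
      exact (Ainj h2).symm
  have hfin : {m | π (2*m) / 2 ≠ π (2*m+1) / 2}.Finite := by
    by_contra hinf
    have hinf : {m | π (2*m) / 2 ≠ π (2*m+1) / 2}.Infinite := hinf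
    obtain ⟨f, hf1, hf2⟩ := exists_seq_of_forall_finset_exists
      (fun m => π (2*m) / 2 ≠ π (2*m+1) / 2)
      (fun x y => x < y ∧ π (2*x) / 2 < π (2*y) / 2 ∧ π (2*x) / 2 < π (2*y+1) / 2 ∧
        π (2*x+1) / 2 < π (2*y) / 2 ∧ π (2*x+1) / 2 < π (2*y+1) / 2) (by
      intro s hs
      obtain ⟨B, hB⟩ : ∃ B, ∀ x ∈ s, x ≤ B ∧ π (2*x) / 2 ≤ B ∧ π (2*x+1) / 2 ≤ B := by
        refine ⟨s.sup (fun x => x + π (2*x) / 2 + π (2*x+1) / 2), fun x hx => ?_⟩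
        have := Finset.le_sup (f := fun x => x + π (2*x) / 2 + π (2*x+1) / 2) hx
        omega
      have hbad : {m | m ≤ B ∨ π (2*m) / 2 ≤ B ∨ π (2*m+1) / 2 ≤ B}.Finite := by
        have hA : (Iic (2*B+1)).Finite := Set.finite_Iic _
        have h1 : {m | π (2*m) ∈ Iic (2*B+1)}.Finite :=
          hA.preimage (Function.Injective.injOn (fun x y e => by have := hinj e; omega))
        have h2 : {m | π (2*m+1) ∈ Iic (2*B+1)}.Finite :=
          hA.preimage (Function.Injective.injOn (fun x y e => by have := hinj e; omega))
        refine ((Set.finite_Iic B).union (h1.union h2)).subset ?_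
        rintro m (h | h | h)
        · exact Or.inl h
        · refine Or.inr (Or.inl ?_)
          change π (2*m) ≤ 2*B+1; omega
        · refine Or.inr (Or.inr ?_)
          change π (2*m+1) ≤ 2*B+1; omega
      obtain ⟨m, hm1, hm2⟩ := (hinf.sdiff hbad).nonempty
      refine ⟨m, hm1, fun x hx => ?_⟩
      have := hB x hx
      have hm3 : ¬ (m ≤ B ∨ π (2*m) / 2 ≤ B ∨ π (2*m+1) / 2 ≤ B) := hm2
      omega)
    have hfm : StrictMono f := fun i k h => (hf2 i k h).1
    obtain ⟨y, hyK, hyc, hya, hyb⟩ := exists_test hK (fun i => π (2 * f i) / 2)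
      (fun i => π (2 * f i + 1) / 2) (by
        intro i k
        rcases lt_trichotomy i k with h | h | h
        · have := hf2 i k h; omega
        · subst h; exact hf1 i
        · have := hf2 k i h; omega)
    obtain ⟨j, hj, φ, hφ, hlim⟩ := isCompact_cube.tendsto_subseq (x := fun i => sh (f i) y)
      (fun i n => hyc _)
    obtain ⟨j', hj', hJ⟩ := P_homeoJ hK F j hj
    let Y : K := ⟨y, hyK⟩
    have main : ∀ (ν : ℕ → ℕ), StrictMono ν → (∀ i, ν i / 2 = f (φ i)) →
        Tendsto (fun i => y ((π (ν i) / 2 : ℕ) : ℤ)) atTop (𝓝 (j' 0)) := by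
      intro ν hν hνf
      have h1 : Tendsto (fun i => (⟨Apt (ν i) Y, Apt_mem (Nat.zero_le _) Y⟩ : PS K 0)) atTop
          (𝓝 ⟨(Y, j, 0), J_mem 0 hj Y⟩) := by
        rw [tendsto_subtype_rng]
        refine tendsto_const_nhds.prodMk_nhds (Tendsto.prodMk_nhds ?_ ?_)
        · simp only [hνf]; exact hlim
        · exact (tendsto_pow_atTop_nhds_zero_of_lt_one (by norm_num) (by norm_num)).comp
            hν.tendsto_atTop
      have h2 := (F.continuous.tendsto _).comp h1
      have h3 := ((continuous_apply (0 : ℤ)).comp (continuous_fst.comp (continuous_snd.comp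
        (continuous_subtype_val (p := (· ∈ PS K 1)))))).tendsto _ |>.comp h2
      simp only [Function.comp_def, hJ, hπ] at h3
      simpa [Apt, sh, Y] using h3
    have m1 := main (fun i => 2 * f (φ i)) (fun i k h => by
      have := hfm (hφ h); beta_reduce; omega) (fun i => by omega)
    have m2 := main (fun i => 2 * f (φ i) + 1) (fun i k h => by
      have := hfm (hφ h); beta_reduce; omega) (fun i => by omega)
    simp only [hya] at m1
    simp only [hyb] at m2
    have e1 := tendsto_nhds_unique m1 tendsto_const_nhds
    have e2 := tendsto_nhds_unique m2 tendsto_const_nhds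
    rw [e1] at e2
    norm_num at e2
  obtain ⟨N, hN⟩ := hfin.bddAbove
  refine parity π hinj hrange (N + 1) (fun m hm => ?_)
  by_contra hne
  have : m ≤ N := hN hne
  omega
end S10

namespace S10
open Set Filter Topology

theorem sum_clopen (X : Type u) [TopologicalSpace X] {A B : Type} [TopologicalSpace A]
    [TopologicalSpace B] (f : A → B) (hf : IsEmbedding f) (hc : IsClopen (range f)) :
    HomeoToClopenSubset (X ⊕ ULift.{u} A) (X ⊕ ULift.{u} B) := by
  let t : Set (X ⊕ ULift.{u} B) := {z | ∀ b, z = Sum.inr b → b.down ∈ range f}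
  have ht : IsClopen t := by
    have e1 : t = range Sum.inl ∪ Sum.inr '' (ULift.down ⁻¹' range f) := by
      ext z
      rcases z with x | b
      · simp [t]
      · constructor
        · intro h
          exact Or.inr ⟨b, h b rfl, rfl⟩
        · rintro (⟨x, e⟩ | ⟨b', hb', e⟩)
          · cases e
          · rintro b'' e'
            rw [← e] at e'
            rw [← Sum.inr_injective e']; exact hb'
    constructor
    · rw [e1]
      exact isClosed_range_inl.union
        (IsClosedEmbedding.inr.isClosedMap _ (hc.1.preimage continuous_uliftDown))
    · rw [e1]
      exact isOpen_range_inl.union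
        (IsOpenEmbedding.inr.isOpenMap _ (hc.2.preimage continuous_uliftDown))
  let g : X ⊕ ULift.{u} A → X ⊕ ULift.{u} B := Sum.map id (fun a => ⟨f a.down⟩)
  have hof : IsOpenEmbedding f := ⟨hf, hc.2⟩
  have hg2 : IsOpenEmbedding (fun a : ULift.{u} A => (⟨f a.down⟩ : ULift.{u} B)) :=
    (Homeomorph.ulift (X := B)).symm.isOpenEmbedding.comp
      (hof.comp (Homeomorph.ulift (X := A)).isOpenEmbedding)
  have hg : IsOpenEmbedding g := by
    refine IsOpenEmbedding.of_continuous_injective_isOpenMap ?_ ?_ ?_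
    · exact continuous_id.sumMap hg2.continuous
    · exact Function.injective_id.sumMap hg2.injective
    · exact IsOpenMap.id.sumMap hg2.isOpenMap
  have hr : range g = t := by
    ext z
    rcases z with x | b
    · simp [t, g]
    · constructor
      · rintro ⟨x | a, e⟩
        · simp [g] at e
        · rintro b' e'
          simp only [g, Sum.map_inr] at e
          rw [e'] at e
          have := Sum.inr_injective e
          exact ⟨a.down, congrArg ULift.down this⟩
      · intro h
        obtain ⟨a, ha⟩ := h b rfl
        exact ⟨Sum.inr ⟨a⟩, by simp [g, ha]⟩
  refine ⟨t, ht, ?_⟩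
  rw [← hr]
  exact ⟨hg.isEmbedding.toHomeomorph⟩

theorem P_clopen1 (K : Set YY) (X : Type u) [TopologicalSpace X] :
    HomeoToClopenSubset (X ⊕ ULift.{u} (PS K 1)) (X ⊕ ULift.{u} (PS K 0)) := by
  have hsub : PS K 1 ⊆ PS K 0 := by
    rintro p (h | ⟨n, -, h⟩)
    · exact Or.inl h
    · exact Or.inr ⟨n, Nat.zero_le _, h⟩
  refine sum_clopen X (inclusion hsub) (IsEmbedding.inclusion hsub) ?_
  have hcont : Continuous (fun p : PS K 0 => p.1.2.2) :=
    continuous_snd.comp (continuous_snd.comp continuous_subtype_val)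
  have key : ∀ p : PS K 0, (p ∈ range (inclusion hsub) → p.1.2.2 ≤ 1 / 2) ∧
      (p.1.2.2 < 1 → p ∈ range (inclusion hsub)) := by
    intro p
    rw [range_inclusion]
    constructor
    · rintro (h | ⟨n, hn, h⟩)
      · rw [h.2]; norm_num
      · rw [h]
        simpa [Apt] using pow_le_pow_of_le_one (a := (1 / 2 : ℝ)) (by norm_num) (by norm_num) hn
    · intro h
      rcases p.2 with h' | ⟨n, hn, h'⟩
      · exact Or.inl h'
      · refine Or.inr ⟨n, ?_, h'⟩
        rcases Nat.eq_zero_or_pos n with h0 | h0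
        · rw [h', h0] at h
          simp [Apt] at h
        · exact h0
  have e1 : range (inclusion hsub) = {p : PS K 0 | p.1.2.2 < 1} := by
    ext p
    exact ⟨fun h => lt_of_le_of_lt ((key p).1 h) (by norm_num), (key p).2⟩
  have e2 : range (inclusion hsub) = {p : PS K 0 | p.1.2.2 ≤ 1 / 2} := by
    ext p
    exact ⟨(key p).1, fun h => (key p).2 (lt_of_le_of_lt h (by norm_num))⟩
  constructor
  · rw [e2]; exact isClosed_le hcont continuous_const
  · rw [e1]; exact isOpen_lt hcont continuous_const

theorem P_clopen2 (K : Set YY) (X : Type u) [TopologicalSpace X] :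
    HomeoToClopenSubset (X ⊕ ULift.{u} (PS K 0)) (X ⊕ ULift.{u} (PS K 1)) := by
  let T : K × YY × ℝ → K × YY × ℝ := fun p => (p.1, sh 1 p.2.1, p.2.2 / 4)
  let S : K × YY × ℝ → K × YY × ℝ := fun p => (p.1, (fun i => p.2.1 (i - 1)), 4 * p.2.2)
  have hT : Continuous T := by
    refine continuous_fst.prodMk (Continuous.prodMk ?_ ?_)
    · exact (continuous_sh 1).comp (continuous_fst.comp continuous_snd)
    · fun_prop
  have hS : Continuous S := by
    refine continuous_fst.prodMk (Continuous.prodMk ?_ ?_)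
    · refine continuous_pi fun i => ?_
      exact (continuous_apply (i - 1)).comp (continuous_fst.comp continuous_snd)
    · fun_prop
  have hST : Function.LeftInverse S T := by
    rintro ⟨y, z, h⟩
    refine Prod.ext rfl (Prod.ext ?_ ?_)
    · funext i; simp [S, T, sh]
    · simp only [S, T]; ring
  have hTS : ∀ p, T (S p) = p := by
    rintro ⟨y, z, h⟩
    refine Prod.ext rfl (Prod.ext ?_ ?_)
    · funext i; simp [S, T, sh]
    · simp only [S, T]; ring
  have hTA : ∀ n (y : K), T (Apt n y) = Apt (n + 2) y := by
    intro n y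
    refine Prod.ext rfl (Prod.ext ?_ ?_)
    · funext i
      have : (n + 2) / 2 = n / 2 + 1 := by omega
      simp only [T, Apt, sh, this]
      congr 1
      push_cast; ring_nf
    · simp only [T, Apt, pow_add]; norm_num; ring
  have hm : ∀ p : PS K 0, T p.1 ∈ PS K 1 := by
    intro ⟨p, hp⟩
    change T p ∈ PS K 1
    rcases hp with h | ⟨n, -, h⟩
    · refine Or.inl ⟨fun i => h.1 _, ?_⟩
      simp only [T, h.2]; norm_num
    · rw [h, hTA]; exact Apt_mem (by omega) _
  let f : PS K 0 → PS K 1 := fun p => ⟨T p.1, hm p⟩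
  have hf : IsEmbedding f :=
    ((IsEmbedding.of_leftInverse hST hS hT).comp IsEmbedding.subtypeVal).codRestrict _ hm
  refine sum_clopen X f hf ?_
  have hcont : Continuous (fun p : PS K 1 => p.1.2.2) :=
    continuous_snd.comp (continuous_snd.comp continuous_subtype_val)
  have key : ∀ p : PS K 1, (p ∈ range f → p.1.2.2 ≤ 1 / 4) ∧
      (p.1.2.2 < 1 / 2 → p ∈ range f) := by
    intro p
    constructor
    · rintro ⟨⟨a, h | ⟨n, hn, h⟩⟩, rfl⟩
      · simp only [f, T, h.2]; norm_num
      · simp only [f]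
        rw [h]
        have := pow_le_one₀ (a := (1 / 2 : ℝ)) (n := n) (by norm_num) (by norm_num)
        simp only [T, Apt]; linarith
    · intro h
      rcases p.2 with h' | ⟨n, hn, h'⟩
      · refine ⟨⟨S p.1, Or.inl ⟨fun i => h'.1 _, ?_⟩⟩, Subtype.ext (hTS _)⟩
        simp only [S, h'.2]; norm_num
      · have h2 : n ≠ 1 := by
          rintro rfl
          rw [h'] at h
          simp [Apt] at h
        obtain ⟨m, rfl⟩ : ∃ m, n = m + 2 := ⟨n - 2, by omega⟩
        refine ⟨⟨Apt m p.1.1, Apt_mem (Nat.zero_le _) _⟩, Subtype.ext ?_⟩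
        rw [h']
        exact hTA m _
  have e1 : range f = {p : PS K 1 | p.1.2.2 < 1 / 2} := by
    ext p
    exact ⟨fun h => lt_of_le_of_lt ((key p).1 h) (by norm_num), (key p).2⟩
  have e2 : range f = {p : PS K 1 | p.1.2.2 ≤ 1 / 4} := by
    ext p
    exact ⟨(key p).1, fun h => (key p).2 (lt_of_le_of_lt h (by norm_num))⟩
  constructor
  · rw [e2]; exact isClosed_le hcont continuous_const
  · rw [e1]; exact isOpen_lt hcont continuous_const
end S10

namespace S10
open Set Filter Topology

theorem exists_w : ∃ w : YY → ℝ, Continuous w ∧ ∀ y, w y = 0 ↔ y ∈ range kpt := by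
  letI := TopologicalSpace.metrizableSpaceMetric YY
  have hcl : IsClosed (range kpt) := by
    have : range kpt = {y : YY | y 0 ∈ range ((↑) : ℕ → ℝ)} ∩
        ⋂ i : {i : ℤ // i ≠ 0}, {y : YY | y i = 0} := by
      ext y
      constructor
      · rintro ⟨n, rfl⟩
        refine ⟨⟨n, by simp [kpt]⟩, mem_iInter.2 fun i => ?_⟩
        simp [kpt, i.2]
      · rintro ⟨⟨n, hn⟩, h⟩
        refine ⟨n, ?_⟩
        funext i
        by_cases hi : i = 0
        · subst hi; simp [kpt, hn]
        · have := mem_iInter.1 h ⟨i, hi⟩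
          simp only [kpt, if_neg hi]
          exact this.symm
    rw [this]
    refine IsClosed.inter ?_ (isClosed_iInter fun i => ?_)
    · exact Nat.isClosedEmbedding_coe_real.isClosed_range.preimage (continuous_apply (0 : ℤ))
    · exact isClosed_eq (continuous_apply _) continuous_const
  refine ⟨fun y => Metric.infDist y (range kpt), Metric.continuous_infDist_pt _, fun y => ?_⟩
  exact (hcl.mem_iff_infDist_zero (range_nonempty _)).symm

/-- A continuous function vanishing exactly at the special points. -/
noncomputable def ww : YY → ℝ := Classical.choose exists_w

theorem continuous_ww : Continuous ww := (Classical.choose_spec exists_w).1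

theorem ww_eq {y : YY} : ww y = 0 ↔ y ∈ range kpt := (Classical.choose_spec exists_w).2 y

theorem ww_kpt (n : ℕ) : ww (kpt n) = 0 := ww_eq.2 ⟨n, rfl⟩

/-- Tent functions at the special points. -/
noncomputable def vv (n : ℕ) (y : YY) : ℝ := max 0 (1 - |y 0 - n|)

theorem continuous_vv (n : ℕ) : Continuous (vv n) := by
  unfold vv; fun_prop

theorem vv_self (n : ℕ) : vv n (kpt n) = 1 := by simp [vv, kpt]

theorem vv_ne {m n : ℕ} (h : m ≠ n) : vv m (kpt n) = 0 := by
  simp only [vv, kpt, if_true]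
  apply max_eq_left
  have h1 : (1 : ℤ) ≤ |(n : ℤ) - m| := Int.one_le_abs (by omega)
  have h2 : (1 : ℝ) ≤ |(n : ℝ) - m| := by exact_mod_cast h1
  linarith

/-- Bounded functions. -/
abbrev LL (C : Type u) : Type u := lp (fun _ : C => ℝ) ⊤

open Classical in
/-- Unit vectors. -/
noncomputable def ee {C : Type u} (c : C) : LL C := lp.single ⊤ c (1 : ℝ)

theorem ee_self {C : Type u} (c : C) : (ee c : LL C) c = 1 := by
  classical
  exact lp.single_apply_self _ _ _

theorem ee_ne {C : Type u} {c d : C} (h : d ≠ c) : (ee c : LL C) d = 0 := by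
  classical
  exact lp.single_apply_ne _ _ _ h

theorem continuous_ev {C : Type u} (c : C) : Continuous (fun z : LL C => z c) :=
  (lp.evalCLM ℝ (fun _ : C => ℝ) ⊤ c).continuous

/-- Ambient space for gluing. -/
abbrev ZZ (K : Set YY) (I C : Type u) : Type u := K × LL I × (ℕ → LL C)

/-- Parametrisation of the glued space. -/
noncomputable def Phi {K : Set YY} {I C : Type u} (c : ℕ → I → C) (x : K) (b : I) : ZZ K I C :=
  (x, ww x • ee b, fun n => vv n x • ee (c n b))

/-- The glued space. -/
def XX (K : Set YY) {I C : Type u} (c : ℕ → I → C) : Set (ZZ K I C) :=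
  range fun p : K × I => Phi c p.1 p.2

variable {K : Set YY} {I C I' C' : Type u}

theorem Phi_mem (c : ℕ → I → C) (x : K) (b : I) : Phi c x b ∈ XX K c := ⟨(x, b), rfl⟩

theorem continuous_Phi (c : ℕ → I → C) (b : I) : Continuous (fun x : K => Phi c x b) := by
  refine continuous_id.prodMk (Continuous.prodMk ?_ (continuous_pi fun n => ?_))
  · exact (continuous_ww.comp continuous_subtype_val).smul continuous_const
  · exact ((continuous_vv n).comp continuous_subtype_val).smul continuous_const

theorem smul_ee_self {C : Type u} (a : ℝ) (c : C) : (a • ee c : LL C) c = a := by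
  simp [ee_self]

theorem smul_ee_ne {C : Type u} (a : ℝ) {c d : C} (h : d ≠ c) : (a • ee c : LL C) d = 0 := by
  simp [ee_ne h]

theorem smul_ee_inj {C : Type u} {a : ℝ} (ha : a ≠ 0) {c d : C} (h : a • ee c = a • ee d) :
    c = d := by
  by_contra hne
  have := congrArg (fun z : LL C => z c) h
  simp only [smul_ee_self, smul_ee_ne a hne] at this
  exact ha this

theorem Phi_inj {c : ℕ → I → C} {x : K} (hx : ww x ≠ 0) {b d : I}
    (h : Phi c x b = Phi c x d) : b = d :=
  smul_ee_inj hx (congrArg (fun z => z.2.1) h)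

theorem Phi_kpt {c : ℕ → I → C} {x : K} {n : ℕ} (hx : (x : YY) = kpt n) {b d : I} :
    Phi c x b = Phi c x d ↔ c n b = c n d := by
  constructor
  · intro h
    have h1 := congrFun (congrArg (fun z => z.2.2) h) n
    simp only [Phi, hx, vv_self] at h1
    exact smul_ee_inj one_ne_zero h1
  · intro h
    refine Prod.ext rfl (Prod.ext ?_ ?_)
    · simp [Phi, hx, ww_kpt]
    · funext m
      by_cases hm : m = n
      · subst hm; simp [Phi, h]
      · simp [Phi, hx, vv_ne hm]

theorem Good.exists_ww (hK : Good K) : ∃ x : K, ww x ≠ 0 := by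
  have hc : {x : K | (x : YY) ∈ range kpt}.Countable :=
    (countable_range kpt).preimage Subtype.val_injective
  have : Nonempty K := ⟨⟨kpt 0, hK.kpt_mem 0⟩⟩
  obtain ⟨x, hx⟩ := (hK.dense _ hc).nonempty
  exact ⟨x, fun h => hx (ww_eq.1 h)⟩

theorem block (hK : Good K) (c : ℕ → I → C) (f : K → XX K c) (hf : Continuous f)
    (hi : Function.Injective f) : ∃ b, ∀ x, (f x).1 = Phi c x b := by
  have hf' : Continuous (fun y => (f y).1) := continuous_subtype_val.comp hf
  have hg : Continuous (fun y => (f y).1.1) := continuous_fst.comp hf'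
  have hex : ∀ t, ∃ b, (f t).1 = Phi c (f t).1.1 b := by
    intro t
    obtain ⟨⟨x, b⟩, h⟩ := (f t).2
    refine ⟨b, ?_⟩
    rw [← h]; rfl
  choose β hβ using hex
  have hA : ∀ n, {t : K | ((f t).1.1 : YY) = kpt n}.Countable := by
    intro n
    set A := {t : K | ((f t).1.1 : YY) = kpt n} with hAdef
    have hval : ∀ t ∈ A, (f t).1.2.2 n = ee (c n (β t)) := by
      intro t ht
      have ht' : ((f t).1.1 : YY) = kpt n := ht
      rw [hβ t]
      simp only [Phi, ht', vv_self, one_smul]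
    have hsep : ∀ t ∈ A, ∀ s ∈ A, c n (β t) = c n (β s) → t = s := by
      intro t ht s hs e
      have e0 : (f t).1.1 = (f s).1.1 := Subtype.ext (Eq.trans ht (Eq.symm hs))
      apply hi
      apply Subtype.ext
      rw [hβ t, hβ s, e0]
      exact (Phi_kpt (hx := hs)).2 e
    have hd : DiscreteTopology A := by
      rw [discreteTopology_iff_isOpen_singleton]
      intro t
      have hcont : Continuous (fun s : A => ((f s.1).1.2.2 n) (c n (β t.1))) :=
        (continuous_ev _).comp ((continuous_apply n).comp (continuous_snd.comp
          (continuous_snd.comp (hf'.comp continuous_subtype_val))))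
      have hset : {t} = {s : A | ((f s.1).1.2.2 n) (c n (β t.1)) ≠ 0} := by
        ext s
        simp only [mem_singleton_iff]
        constructor
        · rintro rfl
          change ((f s.1).1.2.2 n) (c n (β s.1)) ≠ 0
          rw [hval s.1 s.2, ee_self]
          exact one_ne_zero
        · intro h
          by_contra hne
          apply h
          rw [hval s.1 s.2]
          apply ee_ne
          intro e
          exact hne (Subtype.ext (hsep _ t.2 _ s.2 e).symm)
      rw [hset]
      exact isOpen_ne_fun hcont continuous_const
    have : Countable A := TopologicalSpace.separableSpace_iff_countable.1 inferInstance
    exact A.to_countable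
  have hC := countable_iUnion hA
  set Cs := ⋃ n, {t : K | ((f t).1.1 : YY) = kpt n} with hCs
  have hwn : ∀ t ∈ Csᶜ, ww ((f t).1.1) ≠ 0 := by
    intro t ht h
    obtain ⟨n, hn⟩ := ww_eq.1 h
    exact ht (mem_iUnion.2 ⟨n, hn.symm⟩)
  have : Nonempty K := ⟨⟨kpt 0, hK.kpt_mem 0⟩⟩
  obtain ⟨t0, ht0⟩ := (hK.dense _ hC).nonempty
  have hψc : Continuous (fun t => (f t).1.2.1 (β t0)) :=
    (continuous_ev _).comp (continuous_fst.comp (continuous_snd.comp hf'))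
  have hwc : Continuous (fun t => ww ((f t).1.1)) :=
    continuous_ww.comp (continuous_subtype_val.comp hg)
  have hψ1 : ∀ t, β t = β t0 → (f t).1.2.1 (β t0) = ww ((f t).1.1) := by
    intro t h
    rw [← h, hβ t]
    exact smul_ee_self _ _
  have hψ2 : ∀ t, β t ≠ β t0 → (f t).1.2.1 (β t0) = 0 := by
    intro t h
    rw [hβ t]
    exact smul_ee_ne _ h.symm
  have hall : ∀ t ∈ Csᶜ, β t = β t0 := by
    intro t ht
    by_contra hne
    obtain ⟨s, hs, hsU, hsV⟩ := hK.conn _ hC {t | (f t).1.2.1 (β t0) ≠ 0}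
      {t | (f t).1.2.1 (β t0) ≠ ww ((f t).1.1)}
      (isOpen_ne_fun hψc continuous_const) (isOpen_ne_fun hψc hwc) (by
        intro s hs
        by_cases h : β s = β t0
        · left
          change (f s).1.2.1 (β t0) ≠ 0
          rw [hψ1 s h]; exact hwn s hs
        · right
          change (f s).1.2.1 (β t0) ≠ ww ((f s).1.1)
          rw [hψ2 s h]; exact (hwn s hs).symm)
      ⟨t0, ht0, by
        change (f t0).1.2.1 (β t0) ≠ 0
        rw [hψ1 t0 rfl]; exact hwn t0 ht0⟩
      ⟨t, ht, by
        change (f t).1.2.1 (β t0) ≠ ww ((f t).1.1)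
        rw [hψ2 t hne]; exact (hwn t ht).symm⟩
    by_cases h : β s = β t0
    · exact hsV (hψ1 s h)
    · exact hsU (hψ2 s h)
  have hcl : IsClosed {t : K | (f t).1 = Phi c (f t).1.1 (β t0)} :=
    isClosed_eq hf' ((continuous_Phi c (β t0)).comp hg)
  have hfin : ∀ t, (f t).1 = Phi c (f t).1.1 (β t0) := by
    intro t
    have hsub : Csᶜ ⊆ {t : K | (f t).1 = Phi c (f t).1.1 (β t0)} := by
      intro s hs
      have := hβ s
      rw [hall s hs] at this
      exact this
    exact closure_minimal hsub hcl (hK.dense _ hC t)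
  have hid := hK.rig _ hg (by
    intro a b e
    apply hi; apply Subtype.ext
    rw [hfin a, hfin b]
    exact congrArg (fun z => Phi c z (β t0)) e)
  refine ⟨β t0, fun x => ?_⟩
  rw [hfin x]
  exact congrArg (fun z => Phi c z (β t0)) (hid x)

/-- The leaf of the glued space with index `b`. -/
noncomputable def leaf (c : ℕ → I → C) (b : I) (x : K) : XX K c := ⟨Phi c x b, Phi_mem c x b⟩

theorem continuous_leaf (c : ℕ → I → C) (b : I) : Continuous (leaf (K := K) c b) :=
  (continuous_Phi c b).subtype_mk _

theorem leaf_inj (c : ℕ → I → C) (b : I) : Function.Injective (leaf (K := K) c b) := by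
  intro x y h
  exact congrArg (fun z : XX K c => z.1.1) h

theorem inj_code (hK : Good K) (c : ℕ → I → C) (c' : ℕ → I' → C') (f : XX K c → XX K c')
    (hf : Continuous f) (hi : Function.Injective f) :
    ∃ F : I → I', Function.Injective F ∧
      ∀ n p p', c n p = c n p' → c' n (F p) = c' n (F p') := by
  choose F hF using fun b => block hK c' (fun x => f (leaf c b x))
    (hf.comp (continuous_leaf c b)) (hi.comp (leaf_inj c b))
  refine ⟨F, ?_, ?_⟩
  · intro b d e
    obtain ⟨x, hx⟩ := hK.exists_ww
    have h1 := hF b x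
    rw [e, ← hF d x] at h1
    exact Phi_inj hx (congrArg Subtype.val (hi (Subtype.ext h1)))
  · intro n p p' e
    let x : K := ⟨kpt n, hK.kpt_mem n⟩
    have h1 : leaf c p x = leaf c p' x := Subtype.ext ((Phi_kpt (x := x) (n := n) rfl).2 e)
    have h2 := hF p x
    rw [h1, hF p' x] at h2
    exact (Phi_kpt (x := x) (n := n) rfl).1 h2.symm

theorem XX_preconn (hK : Good K) (c : ℕ → I → C)
    (h : ∀ p p', ∃ r n m, c n p = c n r ∧ c m r = c m p') : PreconnectedSpace (XX K c) := by
  have := hK.preconn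
  have hb : ∀ b, IsPreconnected (range (leaf (K := K) c b)) := fun b =>
    isPreconnected_range (continuous_leaf c b)
  have hj : ∀ b d n, c n b = c n d →
      (range (leaf (K := K) c b) ∩ range (leaf (K := K) c d)).Nonempty := by
    intro b d n e
    let x : K := ⟨kpt n, hK.kpt_mem n⟩
    exact ⟨leaf c b x, ⟨x, rfl⟩, ⟨x, Subtype.ext ((Phi_kpt (x := x) (n := n) rfl).2 e.symm)⟩⟩
  refine ⟨isPreconnected_of_forall_pair ?_⟩
  rintro ⟨_, ⟨x, p⟩, rfl⟩ - ⟨_, ⟨y, p'⟩, rfl⟩ -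
  obtain ⟨r, n, m, h1, h2⟩ := h p p'
  refine ⟨range (leaf c p) ∪ (range (leaf c r) ∪ range (leaf c p')), subset_univ _,
    Or.inl ⟨x, rfl⟩, Or.inr (Or.inr ⟨y, rfl⟩), ?_⟩
  refine IsPreconnected.union' ?_ (hb p) (IsPreconnected.union' (hj r p' m h2) (hb r) (hb p'))
  obtain ⟨z, hz1, hz2⟩ := hj p r n h1
  exact ⟨z, hz1, Or.inl hz2⟩

theorem XX_PS (hK : Good K) (c : ℕ → I → C) (p p' : I) (hp : p ≠ p') (n : ℕ)
    (hc : c n p = c n p') (s : ℕ) (f : XX K c → PS K s) (hf : Continuous f)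
    (hi : Function.Injective f) : False := by
  let x : K := ⟨kpt n, hK.kpt_mem n⟩
  obtain ⟨y, hy⟩ := hK.exists_ww
  have h1 : leaf c p x = leaf c p' x := Subtype.ext ((Phi_kpt (x := x) (n := n) rfl).2 hc)
  have hfin : f (leaf c p y) = f (leaf c p' y) → False := fun e =>
    hp (Phi_inj hy (congrArg Subtype.val (hi e)))
  have hz : ∀ m : ℕ, (1 / 2 : ℝ) ^ m ≠ 0 := fun m => by positivity
  rcases P_struct hK s (fun x => f (leaf c p x)) (hf.comp (continuous_leaf c p))
    (hi.comp (leaf_inj c p)) with ⟨m, hm, h⟩ | ⟨j, hj, h⟩ <;>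
  rcases P_struct hK s (fun x => f (leaf c p' x)) (hf.comp (continuous_leaf c p'))
    (hi.comp (leaf_inj c p')) with ⟨m', hm', h'⟩ | ⟨j', hj', h'⟩
  · have e := h x
    rw [h1, h' x] at e
    have e2 : m' = m := half_inj (congrArg (fun z => z.2.2) e)
    apply hfin
    apply Subtype.ext
    rw [h y, h' y, e2]
  · have e := h x
    rw [h1, h' x] at e
    exact hz m (congrArg (fun z => z.2.2) e).symm
  · have e := h x
    rw [h1, h' x] at e
    exact hz m' (congrArg (fun z => z.2.2) e)
  · have e := h x
    rw [h1, h' x] at e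
    have e2 : j' = j := congrArg (fun z => z.2.1) e
    apply hfin
    apply Subtype.ext
    rw [h y, h' y, e2]

theorem mk_PS (K : Set YY) (s : ℕ) : #(PS K s) ≤ 𝔠 := by
  have h0 : #K ≤ 𝔠 := (mk_subtype_le _).trans mk_YY.le
  refine (mk_subtype_le _).trans ?_
  rw [mk_prod, mk_prod]
  simp only [lift_id, mk_YY, mk_real, continuum_mul_self]
  exact (mul_le_mul_left h0 _).trans continuum_mul_self.le

theorem mk_XX (hK : Good K) (c : ℕ → I → C) (hI : 𝔠 ≤ #I) : #(XX K c) = #I := by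
  apply le_antisymm
  · refine mk_range_le.trans ?_
    rw [mk_prod]
    have h0 : #K ≤ 𝔠 := (mk_subtype_le _).trans mk_YY.le
    have h1 : lift.{u} #K ≤ #I := (lift_le.2 h0).trans (by simpa using hI)
    rw [lift_uzero]
    refine (mul_le_mul_left h1 _).trans (mul_eq_self (aleph0_le_continuum.trans hI)).le
  · obtain ⟨x, hx⟩ := hK.exists_ww
    exact mk_le_of_injective (f := fun b => leaf c b x) fun b d e =>
      Phi_inj hx (congrArg Subtype.val e)

theorem sum_map {X X' A A' : Type u} [TopologicalSpace X] [TopologicalSpace X']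
    [TopologicalSpace A] [TopologicalSpace A'] [PreconnectedSpace X]
    (hno : ∀ g : X → A', Continuous g → Function.Injective g → False)
    (f : X ⊕ A → X' ⊕ A') (hf : Continuous f) (hi : Function.Injective f) :
    ∃ g : X → X', Continuous g ∧ Function.Injective g ∧ ∀ x, f (Sum.inl x) = Sum.inl (g x) := by
  have hk : Continuous (fun x => f (Sum.inl x)) := hf.comp continuous_inl
  have hki : Function.Injective (fun x => f (Sum.inl x)) := hi.comp Sum.inl_injective
  have hcl : IsClopen ((fun x => f (Sum.inl x)) ⁻¹' range Sum.inl) :=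
    ⟨isClosed_range_inl.preimage hk, isOpen_range_inl.preimage hk⟩
  rcases isClopen_iff.1 hcl with h | h
  · exfalso
    have h2 : ∀ x, ∃ b, f (Sum.inl x) = Sum.inr b := by
      intro x
      rcases e : f (Sum.inl x) with a | b
      · have : x ∈ (fun x => f (Sum.inl x)) ⁻¹' range Sum.inl := ⟨a, e.symm⟩
        rw [h] at this
        exact this.elim
      · exact ⟨b, rfl⟩
    choose g hg using h2
    refine hno g ?_ ?_
    · refine (IsEmbedding.inr (X := X') (Y := A')).continuous_iff.2 ?_
      exact hk.congr hg
    · intro a b e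
      apply hki
      simp only [hg, e]
  · have h2 : ∀ x, ∃ b, f (Sum.inl x) = Sum.inl b := by
      intro x
      have : x ∈ (fun x => f (Sum.inl x)) ⁻¹' range Sum.inl := by rw [h]; trivial
      obtain ⟨b, hb⟩ := this
      exact ⟨b, hb.symm⟩
    choose g hg using h2
    refine ⟨g, ?_, ?_, hg⟩
    · refine (IsEmbedding.inl (X := X') (Y := A')).continuous_iff.2 ?_
      exact hk.congr hg
    · intro a b e
      apply hki
      simp only [hg, e]

theorem sum_half {X A B : Type u} [TopologicalSpace X] [TopologicalSpace A] [TopologicalSpace B]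
    (F : X ⊕ A ≃ₜ X ⊕ B) (g : X → X) (hg : ∀ x, F.symm (Sum.inl x) = Sum.inl (g x)) :
    ∃ k : A → B, Continuous k ∧ ∀ a, F (Sum.inr a) = Sum.inr (k a) := by
  have h2 : ∀ a, ∃ b, F (Sum.inr a) = Sum.inr b := by
    intro a
    rcases e : F (Sum.inr a) with x | b
    · exfalso
      have := hg x
      rw [← e, F.symm_apply_apply] at this
      cases this
    · exact ⟨b, rfl⟩
  choose k hk using h2
  refine ⟨k, ?_, hk⟩
  refine (IsEmbedding.inr (X := X) (Y := B)).continuous_iff.2 ?_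
  exact (F.continuous.comp continuous_inr).congr hk

theorem sum_homeo {X A B : Type u} [TopologicalSpace X] [TopologicalSpace A]
    [TopologicalSpace B] [PreconnectedSpace X]
    (hA : ∀ g : X → A, Continuous g → Function.Injective g → False)
    (hB : ∀ g : X → B, Continuous g → Function.Injective g → False)
    (F : X ⊕ A ≃ₜ X ⊕ B) : Nonempty (A ≃ₜ B) := by
  obtain ⟨g, -, -, hg⟩ := sum_map hB F F.continuous F.injective
  obtain ⟨g', -, -, hg'⟩ := sum_map hA F.symm F.symm.continuous F.symm.injective
  obtain ⟨k, hk, hk2⟩ := sum_half F g' hg'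
  obtain ⟨l, hl, hl2⟩ := sum_half F.symm g (by simpa using hg)
  refine ⟨⟨⟨k, l, fun a => ?_, fun b => ?_⟩, hk, hl⟩⟩
  · apply Sum.inr_injective (α := X)
    rw [← hl2, ← hk2, F.symm_apply_apply]
  · apply Sum.inr_injective (α := X)
    rw [← hk2, ← hl2, F.apply_symm_apply]

end S10

namespace S10
open TopologicalSpace in
theorem metr_sum (K : Set YY) {I C : Type u} (c : ℕ → I → C) (s : ℕ) :
    MetrizableSpace (XX K c ⊕ ULift.{u} (PS K s)) := by
  have h1 : MetrizableSpace (ULift.{u} (PS K s)) :=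
    (Homeomorph.ulift.{u} (X := PS K s)).isEmbedding.metrizableSpace
  have h2 : MetrizableSpace (ZZ K I C) := inferInstance
  have h3 : MetrizableSpace (XX K c) := inferInstance
  let m1 : MetricSpace (XX K c) := metrizableSpaceMetric _
  let m2 : MetricSpace (ULift.{u} (PS K s)) := metrizableSpaceMetric _
  let m3 : MetricSpace (XX K c ⊕ ULift.{u} (PS K s)) := Metric.metricSpaceSum
  exact inferInstance
end S10

theorem statement10 (α : Cardinal.{u}) (hα : Cardinal.continuum ≤ α)
    (Q : Type u) (hQ : #Q = α) :
    ∃ (G H : Q → Type u) (tG : ∀ q, TopologicalSpace (G q))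
      (tH : ∀ q, TopologicalSpace (H q)),
      (∀ q, @Stmt10Pair α (G q) (H q) (tG q) (tH q)) ∧
      (∀ q q', q ≠ q' →
        @NoInjCont (G q) (tG q) (G q') (tG q') ∧
        @NoInjCont (G q) (tG q) (H q') (tH q') ∧
        @NoInjCont (H q) (tH q) (G q') (tG q') ∧
        @NoInjCont (H q) (tH q) (H q') (tH q')) := by
  obtain ⟨K, hK⟩ := S10.exists_good
  obtain ⟨lo, hwf⟩ := exists_wellFoundedLT Q
  have hα0 : ℵ₀ ≤ α := aleph0_le_continuum.trans hα
  have hne : Nonempty Q := by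
    rw [← mk_ne_zero_iff, hQ]
    exact (aleph0_pos.trans_le hα0).ne'
  have hnt : Nontrivial (WithTop Q) := by
    obtain ⟨q⟩ := hne
    exact ⟨⟨(q : WithTop Q), ⊤, WithTop.coe_ne_top⟩⟩
  let c : Q → ℕ → WithTop Q × WithTop Q → WithTop Q ⊕ (WithTop Q × WithTop Q) :=
    fun q => S10.code (q : WithTop Q)
  have hV : #(WithTop Q) = α := by
    have : #(WithTop Q) = #Q + 1 := mk_option
    rw [this, hQ]
    exact add_one_of_aleph0_le hα0
  have hI : #(WithTop Q × WithTop Q) = α := by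
    rw [mk_prod, lift_id, hV, mul_eq_self hα0]
  have hX : ∀ q, #(S10.XX K (c q)) = α := fun q => by
    rw [S10.mk_XX hK _ (by rw [hI]; exact hα), hI]
  have hS : ∀ q s, #(S10.XX K (c q) ⊕ ULift.{u} (S10.PS K s)) = α := by
    intro q s
    rw [mk_sum, lift_id, lift_id, hX, mk_uLift]
    apply add_eq_left hα0
    refine le_trans ?_ hα
    have := lift_le.{u}.2 (S10.mk_PS K s)
    simpa using this
  have hpc : ∀ q, PreconnectedSpace (S10.XX K (c q)) := by
    intro q
    refine S10.XX_preconn hK _ ?_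
    rintro ⟨a, b⟩ ⟨a', b'⟩
    exact ⟨(a, b'), 0, 1, rfl, rfl⟩
  have hno : ∀ q s (g : S10.XX K (c q) → ULift.{u} (S10.PS K s)), Continuous g →
      Function.Injective g → False := by
    intro q s g hg hi
    obtain ⟨a, b, hab⟩ := exists_pair_ne (WithTop Q)
    refine S10.XX_PS hK (c q) (a, a) (a, b) (fun e => hab (Prod.mk.inj e).2) 0 rfl s
      (fun x => (g x).down) (continuous_uliftDown.comp hg) (ULift.down_injective.comp hi)
  have key : ∀ q q' s s', q ≠ q' → NoInjCont (S10.XX K (c q) ⊕ ULift.{u} (S10.PS K s))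
      (S10.XX K (c q') ⊕ ULift.{u} (S10.PS K s')) := by
    rintro q q' s s' hqq ⟨f, hf, hi⟩
    have := hpc q
    obtain ⟨g, hg, hgi, -⟩ := S10.sum_map (hno q s') f hf hi
    obtain ⟨F, hF, hF2⟩ := S10.inj_code hK (c q) (c q') g hg hgi
    exact hqq (WithTop.coe_injective (S10.code_rigid _ _ F hF hF2))
  refine ⟨fun q => S10.XX K (c q) ⊕ ULift.{u} (S10.PS K 0),
    fun q => S10.XX K (c q) ⊕ ULift.{u} (S10.PS K 1), fun q => inferInstance,
    fun q => inferInstance, fun q => ⟨?_, ?_, hS q 0, hS q 1, S10.P_clopen2 K _,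
      S10.P_clopen1 K _, ⟨fun F => ?_⟩⟩, fun q q' hqq => ⟨key q q' 0 0 hqq, key q q' 0 1 hqq,
      key q q' 1 0 hqq, key q q' 1 1 hqq⟩⟩
  · exact S10.metr_sum K _ 0
  · exact S10.metr_sum K _ 1
  · have := hpc q
    obtain ⟨E⟩ := S10.sum_homeo (hno q 0) (hno q 1) F
    exact S10.P_not_homeo hK (Homeomorph.ulift.symm.trans (E.trans Homeomorph.ulift))
end

section
/- For every cardinal number α ≥ 𝔠, there exists a family {Y_q : q ∈ Q} of metrizable topological spaces indexed by a set Q with |Q| = α, each space of cardinality α, such that the spaces are pairwise non-homeomorphic and for any two distinct indices q ≠ q' there exists no injective continuous map from Y_q into Y_{q'}. -/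
universe u

open Cardinal

open Cardinal Topology Filter

namespace Rig

lemma diag (T : Type) (hT : #T ≤ 𝔠) (A : T → Set ℂ) (φ : T → ℂ → ℂ) (hA : ∀ t, 𝔠 ≤ #(A t))
    (inj : ∀ t, Set.InjOn (φ t) (A t)) (mov : ∀ t, ∀ x ∈ A t, φ t x ≠ x) :
    ∃ p : T → ℂ, (∀ t, p t ∈ A t ∧ p t ≠ 0 ∧ p t ≠ 1) ∧ Function.Injective p ∧
      ∀ s t, φ s (p s) ≠ p t := by
  obtain ⟨r, wo, hr⟩ := Cardinal.exists_ord_eq T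
  have key : ∀ t (prev : ∀ s, r s t → ℂ), ∃ x, x ∈ A t ∧ x ≠ 0 ∧ x ≠ 1 ∧
      ∀ s h, x ≠ prev s h ∧ x ≠ φ s (prev s h) ∧ φ t x ≠ prev s h := by
    intro t prev
    let I := {s // r s t}
    have hI : #I < 𝔠 := by
      refine lt_of_lt_of_le ?_ hT
      have := Ordinal.typein_lt_type r t
      rw [← hr, Cardinal.lt_ord] at this
      exact this
    let f1 : I → ℂ := fun s => prev s.1 s.2
    let f2 : I → ℂ := fun s => φ s.1 (prev s.1 s.2)
    have c1 : #(Set.range f1) < 𝔠 := mk_range_le.trans_lt hI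
    have c2 : #(Set.range f2) < 𝔠 := mk_range_le.trans_lt hI
    have c3 : #(A t ∩ (φ t) ⁻¹' (Set.range f1) : Set ℂ) < 𝔠 := by
      refine lt_of_le_of_lt ?_ c1
      refine Cardinal.mk_le_of_injective (f := fun x => ⟨φ t x.1, x.2.2⟩) ?_
      rintro ⟨x, hx⟩ ⟨y, hy⟩ h
      exact Subtype.ext (inj t hx.1 hy.1 (by simpa using h))
    have c0 : #({0, 1} : Set ℂ) < 𝔠 :=
      ((Cardinal.lt_aleph0_iff_set_finite).2 (Set.toFinite _)).trans aleph0_lt_continuum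
    have uni : ∀ {a b : Set ℂ}, #a < 𝔠 → #b < 𝔠 → #(a ∪ b : Set ℂ) < 𝔠 := fun ha hb =>
      (mk_union_le _ _).trans_lt (add_lt_of_lt aleph0_le_continuum ha hb)
    have c := uni (uni (uni c0 c1) c2) c3
    have : ¬ A t ⊆ _ := fun h => absurd ((hA t).trans (mk_le_mk_of_subset h)) (not_le.2 c)
    obtain ⟨x, hx, hx'⟩ := Set.not_subset.1 this
    simp only [Set.mem_union, not_or, Set.mem_insert_iff, Set.mem_singleton_iff] at hx'
    obtain ⟨⟨⟨h0, h1⟩, h2⟩, h3⟩ := hx'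
    refine ⟨x, hx, h0.1, h0.2, fun s h => ⟨?_, ?_, ?_⟩⟩
    · rintro e; exact h1 ⟨⟨s, h⟩, e.symm⟩
    · rintro e; exact h2 ⟨⟨s, h⟩, e.symm⟩
    · rintro e; exact h3 ⟨hx, ⟨s, h⟩, e.symm⟩
  choose F hF using key
  have wf : WellFounded r := wo.wf
  let p : T → ℂ := wf.fix F
  have hp : ∀ t, p t = F t (fun s _ => p s) := fun t => wf.fix_eq F t
  have H : ∀ t, p t ∈ A t ∧ p t ≠ 0 ∧ p t ≠ 1 ∧
      ∀ s, r s t → p t ≠ p s ∧ p t ≠ φ s (p s) ∧ φ t (p t) ≠ p s := by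
    intro t
    have := hF t (fun s _ => p s)
    rw [← hp t] at this
    exact this
  refine ⟨p, fun t => ⟨(H t).1, (H t).2.1, (H t).2.2.1⟩, ?_, ?_⟩
  · intro s t e
    by_contra hne
    rcases (trichotomous_of r s t) with h | h | h
    · exact ((H t).2.2.2 s h).1 e.symm
    · exact hne h
    · exact ((H s).2.2.2 t h).1 e
  · intro s t e
    rcases (trichotomous_of r s t) with h | h | h
    · exact ((H t).2.2.2 s h).2.1 e.symm
    · subst h; exact mov _ _ (H s).1 e
    · exact ((H s).2.2.2 t h).2.2 e

lemma rigid {V : Type*} [LinearOrder V] [WellFoundedLT V] [OrderTop V] :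
    ∃ R : ℕ → V → V → Prop, ∀ h : V → V, StrictMono h →
      (∀ n x y, R n x y → R n (h x) (h y)) → ∀ x, h x = x := by
  classical
  have : ∀ y : V, ∃ l : ℕ → V, (∃ x : ℕ → V, StrictMono x ∧ IsLUB (Set.range x) y) →
      (StrictMono l ∧ IsLUB (Set.range l) y) := by
    intro y
    by_cases h : ∃ x : ℕ → V, StrictMono x ∧ IsLUB (Set.range x) y
    · exact ⟨h.choose, fun _ => h.choose_spec⟩
    · exact ⟨fun _ => y, fun h' => absurd h' h⟩
  choose l hl using this
  refine ⟨fun n x y => (∃ x : ℕ → V, StrictMono x ∧ IsLUB (Set.range x) y) ∧ x = l y n, ?_⟩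
  intro h hm hR x
  by_contra hne
  have hlt : x < h x := lt_of_le_of_ne (hm.le_apply) (Ne.symm hne)
  let s : ℕ → V := fun k => h^[k] x
  have hs1 : ∀ k, s (k+1) = h (s k) := fun k => Function.iterate_succ_apply' h k x
  have hs : StrictMono s := by
    apply strictMono_nat_of_lt_succ
    intro k
    induction k with
    | zero => simpa [s] using hlt
    | succ k ih => rw [hs1, hs1 (k+1)]; exact hm ih
  obtain ⟨y, hy, hymin⟩ := WellFounded.has_min (wellFounded_lt (α := V))
    (upperBounds (Set.range s)) ⟨⊤, fun _ _ => le_top⟩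
  have hy : IsLUB (Set.range s) y := ⟨hy, fun z hz => not_lt.1 (hymin z hz)⟩
  have hex : ∃ x : ℕ → V, StrictMono x ∧ IsLUB (Set.range x) y := ⟨s, hs, hy⟩
  obtain ⟨l1, l2⟩ := hl y hex
  have hRy : ∀ n, _ ∧ _ := fun n => hR n (l y n) y ⟨hex, rfl⟩
  obtain ⟨l3, l4⟩ := hl (h y) (hRy 0).1
  have hle : ∀ n, l (h y) n ≤ y := by
    intro n
    have : l y n < y := lt_of_lt_of_le (l1 (Nat.lt_succ_self n)) (l2.1 ⟨_, rfl⟩)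
    obtain ⟨_, ⟨k, rfl⟩, hk⟩ := (lt_isLUB_iff hy).1 this
    rw [← (hRy n).2]
    exact (hm hk).le.trans (hs1 k ▸ hy.1 ⟨_, rfl⟩)
  have hyy : h y = y := le_antisymm (l4.2 (by rintro _ ⟨n, rfl⟩; exact hle n)) hm.le_apply
  have hx : x < y := lt_of_lt_of_le hlt (hy.1 ⟨1, rfl⟩)
  obtain ⟨_, ⟨n, rfl⟩, hn⟩ := (lt_isLUB_iff l2).1 hx
  have hfix : h (l y n) = l y n := by rw [(hRy n).2, hyy]
  have hall : ∀ k, s k < l y n := by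
    intro k
    induction k with
    | zero => exact hn
    | succ k ih => rw [hs1, ← hfix]; exact hm ih
  have h1 : y ≤ l y n := hy.2 (by rintro _ ⟨k, rfl⟩; exact (hall k).le)
  exact absurd (lt_of_lt_of_le (l1 (Nat.lt_succ_self n)) (l2.1 ⟨_, rfl⟩)) (not_lt.2 h1)

lemma card_closed (F : Set ℂ) (hF : IsClosed F) (h : ¬ F.Countable) : 𝔠 ≤ #F := by
  obtain ⟨f, h1, -, h3⟩ := hF.exists_nat_bool_injection_of_not_countable h
  have : #(ℕ → Bool) ≤ #F :=
    Cardinal.mk_le_of_injective (f := fun x => ⟨f x, h1 ⟨x, rfl⟩⟩)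
      (fun x y e => h3 (by simpa using e))
  simpa using this

lemma uncount_ball (x : ℂ) {r : ℝ} (hr : 0 < r) : ¬ (Metric.closedBall x r).Countable := by
  intro h
  have h2 : (Metric.ball x r).Countable := h.mono Metric.ball_subset_closedBall
  have := continuum_le_cardinal_of_isOpen ℂ (Metric.isOpen_ball (x := x) (ε := r)) ⟨x, by simpa⟩
  exact absurd (this.trans (Cardinal.le_aleph0_iff_set_countable.2 h2)) (not_le.2 aleph0_lt_continuum)

lemma card_diff {S C : Set ℂ} (hS : 𝔠 ≤ #S) (hC : C.Countable) : 𝔠 ≤ #(S \ C : Set ℂ) := by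
  by_contra h
  have h1 : #S ≤ #(S \ C : Set ℂ) + #C := by
    refine le_trans (mk_le_mk_of_subset ?_) (mk_union_le _ _)
    intro x hx
    by_cases hc : x ∈ C
    · exact Or.inr hc
    · exact Or.inl ⟨hx, hc⟩
  have h2 := add_lt_of_lt aleph0_le_continuum (not_le.1 h)
    ((Cardinal.le_aleph0_iff_set_countable.2 hC).trans_lt aleph0_lt_continuum)
  exact absurd (hS.trans h1) (not_le.2 h2)

def Good (k : Set ℂ × (ℂ → ℂ)) : Prop :=
  𝔠 ≤ #k.1 ∧ Set.InjOn k.2 k.1 ∧ ∀ x ∈ k.1, k.2 x ≠ x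

lemma family0 (K : Set (Set ℂ × (ℂ → ℂ))) (hK : #K ≤ 𝔠) (hG : ∀ k ∈ K, Good k) :
    ∃ B : ℕ → Set ℂ, (∀ i, 0 ∉ B i ∧ 1 ∉ B i) ∧ (∀ i j x, x ∈ B i → x ∈ B j → i = j) ∧
      ∀ k ∈ K, ∀ i, ∃ P : Set ℂ, 𝔠 ≤ #P ∧ P ⊆ B i ∧ P ⊆ k.1 ∧ ∀ x ∈ P, ∀ j, k.2 x ∉ B j := by
  have hT : #(ℕ × ℝ × K) ≤ 𝔠 := by
    simp only [mk_prod, lift_id, mk_real, mk_nat]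
    calc ℵ₀ * (𝔠 * #K) ≤ 𝔠 * (𝔠 * 𝔠) := by
          gcongr; exact aleph0_le_continuum
      _ = 𝔠 := by simp
  obtain ⟨p, h1, h2, h3⟩ := diag (ℕ × ℝ × K) hT (fun t => t.2.2.1.1) (fun t => t.2.2.1.2)
    (fun t => (hG _ t.2.2.2).1) (fun t => (hG _ t.2.2.2).2.1) (fun t => (hG _ t.2.2.2).2.2)
  refine ⟨fun i => Set.range (fun s : ℝ × K => p (i, s)), ?_, ?_, ?_⟩
  · intro i
    constructor
    · rintro ⟨s, hs⟩; exact (h1 _).2.1 hs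
    · rintro ⟨s, hs⟩; exact (h1 _).2.2 hs
  · rintro i j x ⟨s, rfl⟩ ⟨t, ht⟩
    exact (congrArg Prod.fst (h2 ht)).symm
  · intro k hk i
    refine ⟨Set.range (fun r : ℝ => p (i, r, ⟨k, hk⟩)), ?_, ?_, ?_, ?_⟩
    · rw [mk_range_eq, mk_real]
      intro r r' e
      simpa using h2 e
    · rintro _ ⟨r, rfl⟩; exact ⟨_, rfl⟩
    · rintro _ ⟨r, rfl⟩; exact (h1 (i, r, ⟨k, hk⟩)).1
    · rintro _ ⟨r, rfl⟩ j ⟨s, hs⟩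
      exact h3 (i, r, ⟨k, hk⟩) (j, s) hs.symm

noncomputable def extn (c : ℕ → ℂ × ℂ) (x : ℂ) : ℂ :=
  limUnder (comap (fun n => (c n).1) (𝓝 x)) (fun n => (c n).2)

lemma ext_eq {S : Set ℂ} {f : ℂ → ℂ} (hf : ContinuousOn f S) (hS : S.Nonempty) :
    ∃ c : ℕ → ℂ × ℂ, ∀ x ∈ S, extn c x = f x := by
  have : Nonempty S := hS.to_subtype
  obtain ⟨d, hd⟩ := TopologicalSpace.exists_dense_seq S
  refine ⟨fun n => (d n, f (d n)), fun x hx => ?_⟩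
  have hcl : x ∈ closure (Set.range fun n => (d n : ℂ)) := by
    have := hd ⟨x, hx⟩
    rw [closure_subtype] at this
    convert this using 2
    ext y; simp
  have : NeBot (comap (fun n => (d n : ℂ)) (𝓝 x)) := by
    rw [comap_neBot_iff]
    intro t ht
    obtain ⟨y, hy, ⟨n, rfl⟩⟩ := mem_closure_iff_nhds.1 hcl t ht
    exact ⟨n, hy⟩
  refine Tendsto.limUnder_eq ?_
  have h2 : Tendsto (fun n => (d n : ℂ)) (comap (fun n => (d n : ℂ)) (𝓝 x)) (𝓝[S] x) :=
    tendsto_nhdsWithin_iff.2 ⟨tendsto_comap, Eventually.of_forall fun n => (d n).2⟩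
  exact (hf x hx).tendsto.comp h2

lemma family : ∃ B : ℕ → Set ℂ, (∀ i, 0 ∉ B i ∧ 1 ∉ B i) ∧
    (∀ i j x, x ∈ B i → x ∈ B j → i = j) ∧
    (∀ i F, IsClosed F → ¬ F.Countable → 𝔠 ≤ #(B i ∩ F : Set ℂ)) ∧
    (∀ i C, C.Countable → ∀ f : ℂ → ℂ, ContinuousOn f (B i \ C) → Set.InjOn f (B i \ C) →
      (∀ x ∈ B i \ C, ∃ j, f x ∈ B j) → ∀ x ∈ B i \ C, f x = x) := by
  classical
  let K1 : Set (Set ℂ × (ℂ → ℂ)) := (fun F => (F, fun x => x + 1)) '' {F : Set ℂ | IsClosed F ∧ ¬ F.Countable}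
  let sel : (ℕ → ℂ × ℂ) → Set ℂ × (ℂ → ℂ) := fun c =>
    (if h : ∃ A, Good (A, extn c) then h.choose else ∅, extn c)
  let K2 : Set (Set ℂ × (ℂ → ℂ)) := Set.range sel ∩ {k | Good k}
  have hK1 : #K1 ≤ 𝔠 := by
    refine mk_image_le.trans ?_
    refine (mk_le_mk_of_subset (t := {F : Set ℂ | MeasurableSet F}) fun F hF => hF.1.measurableSet).trans ?_
    have h := MeasurableSpace.cardinal_measurableSet_le_continuum
      (s := MeasurableSpace.countableGeneratingSet ℂ)
      ((Cardinal.le_aleph0_iff_set_countable.2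
        MeasurableSpace.countable_countableGeneratingSet).trans aleph0_le_continuum)
    rwa [MeasurableSpace.generateFrom_countableGeneratingSet] at h
  have hK2 : #K2 ≤ 𝔠 := by
    refine (mk_le_mk_of_subset Set.inter_subset_left).trans (mk_range_le.trans ?_)
    simp
  have hK : #(K1 ∪ K2 : Set _) ≤ 𝔠 := (mk_union_le _ _).trans (by
    calc #K1 + #K2 ≤ 𝔠 + 𝔠 := add_le_add hK1 hK2
      _ = 𝔠 := by simp)
  obtain ⟨B, b1, b2, b3⟩ := family0 (K1 ∪ K2) hK (by
    rintro k (⟨F, hF, rfl⟩ | hk)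
    · exact ⟨card_closed F hF.1 hF.2, fun x _ y _ h => by simpa using h, fun x _ => by simp⟩
    · exact hk.2)
  have b4 : ∀ i F, IsClosed F → ¬ F.Countable → 𝔠 ≤ #(B i ∩ F : Set ℂ) := by
    intro i F hF hF'
    obtain ⟨P, p1, p2, p3, -⟩ := b3 (F, fun x => x + 1) (Or.inl ⟨F, ⟨hF, hF'⟩, rfl⟩) i
    exact p1.trans (mk_le_mk_of_subset (Set.subset_inter p2 p3))
  refine ⟨B, b1, b2, b4, ?_⟩
  intro i C hC f hf finj hmap x hx
  by_contra hne
  obtain ⟨c, hc⟩ := ext_eq hf ⟨x, hx⟩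
  have hbig : Good ({y ∈ B i \ C | f y ≠ y}, extn c) := by
    refine ⟨?_, ?_, ?_⟩
    · have hev : ∀ᶠ y in 𝓝[B i \ C] x, f y ≠ y := by
        have h1 := ((hf x hx).sub continuousWithinAt_id).tendsto.eventually_ne (sub_ne_zero.2 hne)
        filter_upwards [h1] with y hy
        exact sub_ne_zero.1 hy
      rw [eventually_nhdsWithin_iff, Metric.nhds_basis_closedBall.eventually_iff] at hev
      obtain ⟨r, hr, hr'⟩ := hev
      refine (card_diff (b4 i _ (Metric.isClosed_closedBall (x := x) (ε := r)) (uncount_ball x hr)) hC).trans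
        (mk_le_mk_of_subset ?_)
      rintro y ⟨⟨y1, y2⟩, y3⟩
      exact ⟨⟨y1, y3⟩, hr' y2 ⟨y1, y3⟩⟩
    · intro y hy z hz e
      simp only [hc y hy.1, hc z hz.1] at e
      exact finj hy.1 hz.1 e
    · intro y hy
      simp only [hc y hy.1]
      exact hy.2
  have hex : ∃ A, Good (A, extn c) := ⟨_, hbig⟩
  have hsel : Good (sel c) := by
    simp only [sel, dif_pos hex]
    exact hex.choose_spec
  obtain ⟨P, p1, p2, -, p4⟩ := b3 (sel c) (Or.inr ⟨⟨c, rfl⟩, hsel⟩) i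
  have : Nonempty (P \ C : Set ℂ) := by
    rw [← Cardinal.mk_ne_zero_iff]
    intro h0
    have := card_diff p1 hC
    rw [h0] at this
    exact absurd this (not_le.2 continuum_pos)
  obtain ⟨y, hy, hyC⟩ := this
  obtain ⟨j, hj⟩ := hmap y ⟨p2 hy, hyC⟩
  refine p4 y hy j ?_
  change extn c y ∈ B j
  rw [hc y ⟨p2 hy, hyC⟩]
  exact hj

lemma conn {B : Set ℂ} (hB : ∀ F, IsClosed F → ¬ F.Countable → 𝔠 ≤ #(B ∩ F : Set ℂ))
    {C : Set ℂ} (hC : C.Countable) : Dense (B \ C) ∧ IsPreconnected (B \ C) := by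
  have hne : ∀ F, IsClosed F → ¬ F.Countable → ∃ x ∈ B \ C, x ∈ F := by
    intro F h1 h2
    have : Nonempty ((B ∩ F) \ C : Set ℂ) := by
      rw [← Cardinal.mk_ne_zero_iff]
      intro h0
      have := card_diff (hB F h1 h2) hC
      rw [h0] at this
      exact absurd this (not_le.2 continuum_pos)
    obtain ⟨x, ⟨h3, h4⟩, h5⟩ := this
    exact ⟨x, ⟨h3, h5⟩, h4⟩
  have hd : Dense (B \ C) := by
    intro x
    rw [mem_closure_iff_nhds_basis Metric.nhds_basis_closedBall]
    intro r hr
    exact hne _ Metric.isClosed_closedBall (uncount_ball x hr)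
  refine ⟨hd, ?_⟩
  rw [isPreconnected_iff_subset_of_disjoint]
  intro u v hu hv huv hdis
  have h0 : u ∩ v = ∅ := by
    by_contra h
    obtain ⟨x, hx, hx'⟩ := hd.inter_open_nonempty _ (hu.inter hv) (Set.nonempty_iff_ne_empty.2 h)
    exact (Set.eq_empty_iff_forall_notMem.1 hdis x) ⟨hx', hx⟩
  have hF : ((u ∪ v)ᶜ).Countable := by
    by_contra h
    obtain ⟨x, hx, hx'⟩ := hne _ (hu.union hv).isClosed_compl h
    exact hx' (huv hx)
  have := (hF.isConnected_compl_of_one_lt_rank (by simp [Complex.rank_real_complex])).isPreconnected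
  rw [compl_compl] at this
  rcases isPreconnected_iff_subset_of_disjoint.1 this u v hu hv subset_rfl (by simp [h0]) with h | h
  · exact Or.inl (huv.trans h)
  · exact Or.inr (huv.trans h)

noncomputable section
open Classical in
/-- single-coordinate vector -/
def sg {V : Type u} (j : V ⊕ (ℕ × V × V)) (a : ℝ × ℂ) :
    lp (fun _ : V ⊕ (ℕ × V × V) => ℝ × ℂ) ⊤ := lp.single ⊤ j a

lemma sg_cont {V : Type u} (j : V ⊕ (ℕ × V × V)) : Continuous (sg j) := by
  classical
  have h := (lp.isometry_single (E := fun _ : V ⊕ (ℕ × V × V) => ℝ × ℂ) (p := ⊤) j).continuous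
  exact h

lemma sg_self {V : Type u} (j : V ⊕ (ℕ × V × V)) (a : ℝ × ℂ) : sg j a j = a := by
  classical
  exact lp.single_apply_self _ _ _

lemma sg_ne {V : Type u} {i j : V ⊕ (ℕ × V × V)} (a : ℝ × ℂ) (h : j ≠ i) : sg i a j = 0 := by
  classical
  exact lp.single_apply_ne _ _ _ h

lemma sg_zero {V : Type u} (j : V ⊕ (ℕ × V × V)) : sg j 0 = 0 := by
  classical
  exact lp.single_zero _ _

lemma ev_cont {V : Type u} (j : V ⊕ (ℕ × V × V)) :
    Continuous (fun y : lp (fun _ : V ⊕ (ℕ × V × V) => ℝ × ℂ) ⊤ => y j) :=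
  (lp.evalCLM ℝ (fun _ : V ⊕ (ℕ × V × V) => ℝ × ℂ) ⊤ j).continuous

def vert {V : Type u} (v : V) : lp (fun _ : V ⊕ (ℕ × V × V) => ℝ × ℂ) ⊤ := sg (Sum.inl v) (1, 0)

def ww (p : ℂ) : ℝ := ‖p‖ * ‖p - 1‖

def inc {V : Type u} (e : ℕ × V × V) (p : ℂ) : lp (fun _ : V ⊕ (ℕ × V × V) => ℝ × ℂ) ⊤ :=
  sg (Sum.inl e.2.1) (max 0 (1 - ‖p‖), 0) + sg (Sum.inl e.2.2) (max 0 (1 - ‖p - 1‖), 0) +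
    sg (Sum.inr e) (ww p, (ww p : ℂ) * p)

lemma inc_cont {V : Type u} (e : ℕ × V × V) : Continuous (inc e) := by
  unfold inc ww
  refine ((sg_cont _).comp ?_).add ((sg_cont _).comp ?_) |>.add ((sg_cont _).comp ?_) <;> fun_prop

lemma inc_zero {V : Type u} (e : ℕ × V × V) : inc e 0 = vert e.2.1 := by
  have h : ((0 : ℝ), (0 : ℂ)) = 0 := rfl
  simp [inc, vert, ww, h, sg_zero]

lemma inc_one {V : Type u} (e : ℕ × V × V) : inc e 1 = vert e.2.2 := by
  have h : ((0 : ℝ), (0 : ℂ)) = 0 := rfl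
  simp [inc, vert, ww, h, sg_zero]

lemma vert_inr {V : Type u} (v : V) (e : ℕ × V × V) : vert v (Sum.inr e) = 0 :=
  sg_ne _ (by simp)

lemma vert_inj {V : Type u} {v v' : V} (h : (vert v (Sum.inl v')).1 ≠ 0) : v = v' := by
  by_contra hne
  exact h (by rw [vert, sg_ne _ (by simpa using Ne.symm hne)]; rfl)

lemma vert_self {V : Type u} (v : V) : (vert v (Sum.inl v)).1 = 1 := by
  rw [vert, sg_self]

lemma vert_injective {V : Type u} : Function.Injective (vert (V := V)) := by
  intro v v' h
  apply vert_inj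
  rw [h, vert_self]; exact one_ne_zero

lemma inc_self {V : Type u} (e : ℕ × V × V) (p : ℂ) :
    inc e p (Sum.inr e) = (ww p, (ww p : ℂ) * p) := by
  simp only [inc, lp.coeFn_add, Pi.add_apply]
  rw [sg_self, sg_ne _ (by simp), sg_ne _ (by simp)]
  simp

lemma inc_ne {V : Type u} {e e' : ℕ × V × V} (h : e' ≠ e) (p : ℂ) :
    inc e p (Sum.inr e') = 0 := by
  simp only [inc, lp.coeFn_add, Pi.add_apply]
  rw [sg_ne _ (fun hh => h (Sum.inr_injective hh)), sg_ne _ (by simp), sg_ne _ (by simp)]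
  simp

lemma ww_ne {p : ℂ} (h0 : p ≠ 0) (h1 : p ≠ 1) : ww p ≠ 0 :=
  mul_ne_zero (norm_ne_zero_iff.2 h0) (norm_ne_zero_iff.2 (sub_ne_zero.2 h1))

def YS {V : Type u} (B : ℕ → Set ℂ) (E : Set (ℕ × V × V)) :
    Set (lp (fun _ : V ⊕ (ℕ × V × V) => ℝ × ℂ) ⊤) :=
  Set.range vert ∪ {y | ∃ e ∈ E, ∃ p ∈ B e.1, y = inc e p}

lemma inc_mem {V : Type u} {B : ℕ → Set ℂ} {E : Set (ℕ × V × V)} {e : ℕ × V × V} (he : e ∈ E)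
    {p : ℂ} (hp : p ∈ B e.1 ∪ {0, 1}) : inc e p ∈ YS B E := by
  rcases hp with hp | rfl | rfl
  · exact Or.inr ⟨e, he, p, hp, rfl⟩
  · exact Or.inl ⟨_, (inc_zero e).symm⟩
  · exact Or.inl ⟨_, (inc_one e).symm⟩

lemma main_edge {V : Type u} {B : ℕ → Set ℂ} (b1 : ∀ i, 0 ∉ B i ∧ 1 ∉ B i)
    (b2 : ∀ i j x, x ∈ B i → x ∈ B j → i = j)
    (b3 : ∀ i F, IsClosed F → ¬ F.Countable → 𝔠 ≤ #(B i ∩ F : Set ℂ))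
    (b4 : ∀ i C, C.Countable → ∀ f : ℂ → ℂ, ContinuousOn f (B i \ C) → Set.InjOn f (B i \ C) →
      (∀ x ∈ B i \ C, ∃ j, f x ∈ B j) → ∀ x ∈ B i \ C, f x = x)
    {E E' : Set (ℕ × V × V)} (f : YS B E → YS B E') (hf : Continuous f)
    (hinj : Function.Injective f) (e : ℕ × V × V) (he : e ∈ E) :
    ∃ e' ∈ E', e'.1 = e.1 ∧ ∀ p (hp : p ∈ B e.1 ∪ {0, 1}),
      (f ⟨inc e p, inc_mem he hp⟩ : lp (fun _ : V ⊕ (ℕ × V × V) => ℝ × ℂ) ⊤) = inc e' p := by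
  classical
  have bne : ∀ {i p}, p ∈ B i → ww p ≠ 0 := by
    intro i p hp
    refine ww_ne ?_ ?_
    · rintro rfl; exact (b1 i).1 hp
    · rintro rfl; exact (b1 i).2 hp
  have rat : ∀ {e : ℕ × V × V} {p}, ww p ≠ 0 →
      (inc e p (Sum.inr e)).2 / ((inc e p (Sum.inr e)).1 : ℂ) = p := by
    intro e p hp
    rw [inc_self]
    have : (ww p : ℂ) ≠ 0 := by exact_mod_cast hp
    field_simp
  set W : Set ℂ := B e.1 ∪ {0, 1} with hW
  let G : W → lp (fun _ : V ⊕ (ℕ × V × V) => ℝ × ℂ) ⊤ := fun p => f ⟨inc e p, inc_mem he p.2⟩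
  have hG : Continuous G := by
    refine continuous_subtype_val.comp (hf.comp ?_)
    exact Continuous.subtype_mk ((inc_cont e).comp continuous_subtype_val) _
  have Ginj : ∀ p p' (hp : p ∈ B e.1) (hp' : p' ∈ B e.1),
      G ⟨p, Or.inl hp⟩ = G ⟨p', Or.inl hp'⟩ → p = p' := by
    intro p p' hp hp' h
    have h2 : inc e p = inc e p' := by simpa using hinj (Subtype.ext h)
    rw [← rat (e := e) (bne hp), h2, rat (bne hp')]
  let C : Set ℂ := {p | ∃ hp : p ∈ B e.1, ∃ v, G ⟨p, Or.inl hp⟩ = vert v}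
  have hC : C.Countable := by
    let GC : C → lp (fun _ : V ⊕ (ℕ × V × V) => ℝ × ℂ) ⊤ := fun x => G ⟨x.1, Or.inl x.2.1⟩
    have hGC : Continuous GC := hG.comp (Continuous.subtype_mk continuous_subtype_val _)
    have : DiscreteTopology C := by
      rw [discreteTopology_iff_isOpen_singleton]
      intro x
      obtain ⟨v, hv⟩ := x.2.2
      have ho : IsOpen {y : C | (GC y (Sum.inl v)).1 ≠ 0} :=
        isOpen_ne.preimage (continuous_fst.comp ((ev_cont _).comp hGC))
      convert ho using 1
      ext y
      simp only [Set.mem_singleton_iff, Set.mem_ofPred_eq]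
      constructor
      · rintro rfl
        simp only [GC]
        rw [hv, vert_self]; exact one_ne_zero
      · intro hy
        obtain ⟨v', hv'⟩ := y.2.2
        simp only [GC] at hy
        rw [hv'] at hy
        have := vert_inj hy
        subst this
        exact Subtype.ext (Ginj _ _ y.2.1 x.2.1 (hv'.trans hv.symm))
    exact TopologicalSpace.separableSpace_iff_countable.1 inferInstance
  obtain ⟨hd, hpre⟩ := conn (b3 e.1) hC
  let S : Set ℂ := B e.1 \ C
  let GS : S → lp (fun _ : V ⊕ (ℕ × V × V) => ℝ × ℂ) ⊤ := fun x => G ⟨x.1, Or.inl x.2.1⟩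
  have hGS : Continuous GS := hG.comp (Continuous.subtype_mk continuous_subtype_val _)
  have hch : ∀ x : S, ∃ e' ∈ E', ∃ q ∈ B e'.1, GS x = inc e' q := by
    intro x
    rcases (f ⟨inc e x.1, inc_mem he (Or.inl x.2.1)⟩).2 with ⟨v, hv⟩ | h
    · exact absurd ⟨x.2.1, v, hv.symm⟩ x.2.2
    · exact h
  choose eo heo q hq hGq using hch
  have hloc : IsLocallyConstant eo := by
    rw [IsLocallyConstant.iff_isOpen_fiber]
    intro e'
    have ho : IsOpen {y : S | (GS y (Sum.inr e')).1 ≠ 0} :=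
      isOpen_ne.preimage (continuous_fst.comp ((ev_cont _).comp hGS))
    convert ho using 1
    ext y
    simp only [Set.mem_ofPred_eq]
    rw [hGq]
    constructor
    · intro h
      have h : eo y = e' := h
      rw [← h, inc_self]
      exact bne (hq y)
    · intro h
      by_contra hne
      exact h (by rw [inc_ne (fun h => hne h.symm)]; rfl)
  have : PreconnectedSpace S := Subtype.preconnectedSpace hpre
  obtain ⟨x0, hx0⟩ := hd.nonempty
  let e' := eo ⟨x0, hx0⟩
  have hee : ∀ x, eo x = e' := fun x => hloc.apply_eq_of_preconnectedSpace x _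
  let h : ℂ → ℂ := fun p => if hp : p ∈ S then q ⟨p, hp⟩ else 0
  have hh : ∀ x : S, h x = q x := fun x => dif_pos x.2
  have hGe : ∀ x : S, GS x = inc e' (q x) := fun x => by rw [hGq, hee]
  have hqe : ∀ x : S, q x ∈ B e'.1 := fun x => hee x ▸ hq x
  have hid : ∀ x ∈ S, h x = x := by
    refine b4 e.1 C hC h ?_ ?_ ?_
    · rw [continuousOn_iff_continuous_domRestrict]
      have : S.domRestrict h = fun x : S => (GS x (Sum.inr e')).2 / ((GS x (Sum.inr e')).1 : ℂ) := by
        funext x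
        change h x = _
        rw [hh, hGe, rat (bne (hqe x))]
      change Continuous (S.domRestrict h)
      rw [this]
      refine Continuous.div (continuous_snd.comp ((ev_cont _).comp hGS))
        (Complex.continuous_ofReal.comp (continuous_fst.comp ((ev_cont _).comp hGS))) ?_
      intro x
      rw [hGe, inc_self]
      exact_mod_cast bne (hqe x)
    · intro x hx y hy hxy
      have h1 := hh ⟨x, hx⟩
      have h2 := hh ⟨y, hy⟩
      have h3 : q ⟨x, hx⟩ = q ⟨y, hy⟩ := by rw [← h1, ← h2]; exact hxy
      refine Ginj x y hx.1 hy.1 ?_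
      change GS ⟨x, hx⟩ = GS ⟨y, hy⟩
      rw [hGe, hGe, h3]
    · intro x hx
      exact ⟨e'.1, by rw [hh ⟨x, hx⟩]; exact hqe _⟩
  refine ⟨e', heo _, ?_, ?_⟩
  · have h1 := hqe ⟨x0, hx0⟩
    rw [← hh, hid x0 hx0] at h1
    exact b2 _ _ x0 h1 hx0.1
  · intro p hp
    have hdW : Dense (Subtype.val ⁻¹' S : Set W) := by
      rw [Subtype.dense_iff, Subtype.image_preimage_coe]
      have : W ∩ S = S := Set.inter_eq_right.2 fun x hx => Or.inl hx.1
      rw [this, hd.closure_eq]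
      exact Set.subset_univ _
    have := Continuous.ext_on hdW hG ((inc_cont e').comp continuous_subtype_val) (by
      intro x hx
      have := hGe ⟨x.1, hx⟩
      rw [← hh, hid x.1 hx] at this
      exact this)
    exact congrFun this ⟨p, hp⟩

lemma main_hom {V : Type u} {B : ℕ → Set ℂ} (b1 : ∀ i, 0 ∉ B i ∧ 1 ∉ B i)
    (b2 : ∀ i j x, x ∈ B i → x ∈ B j → i = j)
    (b3 : ∀ i F, IsClosed F → ¬ F.Countable → 𝔠 ≤ #(B i ∩ F : Set ℂ))
    (b4 : ∀ i C, C.Countable → ∀ f : ℂ → ℂ, ContinuousOn f (B i \ C) → Set.InjOn f (B i \ C) →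
      (∀ x ∈ B i \ C, ∃ j, f x ∈ B j) → ∀ x ∈ B i \ C, f x = x)
    {E E' : Set (ℕ × V × V)} (f : YS B E → YS B E') (hf : Continuous f)
    (hinj : Function.Injective f) :
    ∃ h : V → V, ∀ n s t, (n, s, t) ∈ E → (n, h s, h t) ∈ E' := by
  have : ∀ v : V, ∃ v' : V, ∀ v'', (f ⟨vert v, Or.inl ⟨v, rfl⟩⟩).1 = vert v'' → v' = v'' := by
    intro v
    by_cases h : ∃ v'', (f ⟨vert v, Or.inl ⟨v, rfl⟩⟩).1 = vert v''
    · obtain ⟨w, hw⟩ := h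
      exact ⟨w, fun v'' h => vert_injective (hw.symm.trans h)⟩
    · exact ⟨v, fun v'' h' => absurd ⟨v'', h'⟩ h⟩
  choose h hh using this
  refine ⟨h, fun n s t hE => ?_⟩
  obtain ⟨⟨m, s', t'⟩, he', hm, H⟩ := main_edge b1 b2 b3 b4 f hf hinj _ hE
  have h0 := H 0 (Or.inr (by simp))
  have h1 := H 1 (Or.inr (by simp))
  simp only [inc_zero] at h0
  simp only [inc_one] at h1
  rw [hh s s' h0, hh t t' h1]
  simp only at hm
  rw [← hm]
  exact he'

lemma card_YS {V : Type u} (B : ℕ → Set ℂ) (E : Set (ℕ × V × V)) (hV : 𝔠 ≤ #V) :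
    #(YS B E) = #V := by
  have hV0 : ℵ₀ ≤ #V := aleph0_le_continuum.trans hV
  apply le_antisymm
  · refine (mk_union_le _ _).trans (add_le_of_le hV0 mk_range_le ?_)
    have hsub : {y | ∃ e ∈ E, ∃ p ∈ B e.1, y = inc e p} ⊆
        Set.range (fun x : (ℕ × V × V) × ℂ => inc x.1 x.2) := by
      rintro y ⟨e, -, p, -, rfl⟩
      exact ⟨(e, p), rfl⟩
    refine (mk_le_mk_of_subset hsub).trans (mk_range_le.trans ?_)
    simp only [mk_prod, lift_id, lift_uzero, mk_nat, lift_aleph0, mk_complex, lift_continuum]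
    calc ℵ₀ * (#V * #V) * 𝔠 ≤ #V * (#V * #V) * #V := by gcongr
      _ = #V := by simp [mul_eq_self hV0]
  · exact mk_le_of_injective (f := fun v => (⟨vert v, Or.inl ⟨v, rfl⟩⟩ : YS B E))
      fun v v' h => vert_injective (congrArg Subtype.val h)

end

end Rig

open Rig

theorem statement12 (α : Cardinal.{u}) (hα : Cardinal.continuum ≤ α) :
    ∃ (Q : Type u), #Q = α ∧
      ∃ (Y : Q → Type u) (tY : ∀ q, TopologicalSpace (Y q)),
        (∀ q, @TopologicalSpace.MetrizableSpace (Y q) (tY q)) ∧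
        (∀ q, #(Y q) = α) ∧
        (∀ q q', q ≠ q' → IsEmpty (@Homeomorph (Y q) (Y q') (tY q) (tY q'))) ∧
        (∀ q q', q ≠ q' → @NoInjCont (Y q) (tY q) (Y q') (tY q')) := by
  obtain ⟨B, b1, b2, b3, b4⟩ := family
  let V : Type u := WithTop α.ord.ToType
  have hV : #V = α := by
    have h : #V = #(Option α.ord.ToType) := rfl
    rw [h, mk_option, mk_ord_toType]
    exact add_one_eq (aleph0_le_continuum.trans hα)
  obtain ⟨R, hR⟩ := rigid (V := V)
  let E : V → Set (ℕ × V × V) := fun q => {e | (e.1 = 0 ∧ e.2.1 < e.2.2) ∨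
    (e.1 = 1 ∧ e.2.1 = q ∧ e.2.2 = q) ∨ ∃ n, e.1 = n + 2 ∧ R n e.2.1 e.2.2}
  have key : ∀ q q', q ≠ q' → NoInjCont (YS B (E q)) (YS B (E q')) := by
    rintro q q' hne ⟨f, hf, hinj⟩
    obtain ⟨h, hh⟩ := main_hom b1 b2 b3 b4 f hf hinj
    have hmono : StrictMono h := by
      intro s t hst
      rcases hh 0 s t (Or.inl ⟨rfl, hst⟩) with h1 | h1 | ⟨n, h1, -⟩
      · exact h1.2
      · exact absurd h1.1 (by simp)
      · simp at h1
    have hid := hR h hmono (by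
      intro n x y hxy
      rcases hh (n + 2) x y (Or.inr (Or.inr ⟨n, rfl, hxy⟩)) with h1 | h1 | ⟨m, h1, h2⟩
      · exact absurd h1.1 (by simp)
      · exact absurd h1.1 (by simp)
      · have : n = m := by simpa using h1
        subst this
        exact h2)
    rcases hh 1 q q (Or.inr (Or.inl ⟨rfl, rfl, rfl⟩)) with h1 | h1 | ⟨n, h1, -⟩
    · exact absurd h1.1 (by simp)
    · exact hne ((hid q).symm.trans h1.2.1)
    · simp only at h1; omega
  refine ⟨V, hV, fun q => YS B (E q), fun q => inferInstance, fun q => inferInstance, ?_, ?_, key⟩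
  · intro q
    rw [card_YS B (E q) (hV ▸ hα), hV]
  · intro q q' hne
    exact ⟨fun φ => key q q' hne ⟨φ, φ.continuous, φ.injective⟩⟩
end
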